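/- arXiv:2409.06810 — 2 statements merged into one kernel-verified Lean document; each statement's English description precedes it below -/
import Mathlib

section
/- (Optimal supersaturation at the Turán threshold) Let k ≥ 4 be an integer, let 0 < γ < 1, and let H be a 2-contractible k-tree with s vertices, t edges, and cross-cut number σ = σ(H). Then there exists β > 0, depending only on H and γ, such that for all sufficiently large n the following holds: if F is a k-graph on [n] with |F| = a·C(n,k−1) where a ≥ σ − 1 + γ, then F contains at least β·a^t·n^{s−t} copies of H (distinct subgraphs of F isomorphic to H). -/
open Finset Filter

attribute [local instance] Classical.propDecidable

/-- The vertex set `[n] = {1,…,n}`. -/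
def vtx (n : ℕ) : Finset ℕ := Finset.Icc 1 n

/-- `F` is a `k`-graph on `[n]`: a family of `k`-element subsets of `[n]`. -/
def IsKGraphOn (k n : ℕ) (F : Finset (Finset ℕ)) : Prop :=
  ∀ E ∈ F, E ⊆ vtx n ∧ E.card = k

/-- The vertex set of a hypergraph (union of its edges). -/
def vertexSet {α : Type} [DecidableEq α] (H : Finset (Finset α)) : Finset α := H.sup id

/-- The degree of a vertex: the number of edges containing it. -/
def vdeg {α : Type} [DecidableEq α] (H : Finset (Finset α)) (v : α) : ℕ :=
  (H.filter fun E => v ∈ E).card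

/-- Hypertrees, defined recursively: a single edge is a hypertree, and a hypertree grows
by adding a new leaf edge `E` whose intersection with the current vertex set equals its
intersection with some existing (parent) edge `F`. -/
inductive IsHypertree {α : Type} [DecidableEq α] : Finset (Finset α) → Prop
  | single (E : Finset α) : IsHypertree {E}
  | grow {H : Finset (Finset α)} (E F : Finset α) (hH : IsHypertree H) (hE : E ∉ H)
      (hF : F ∈ H) (hint : E ∩ vertexSet H = E ∩ F) : IsHypertree (insert E H)

/-- A `k`-tree: a `k`-uniform hypertree. -/
def IsKTree {α : Type} [DecidableEq α] (k : ℕ) (H : Finset (Finset α)) : Prop :=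
  IsHypertree H ∧ ∀ E ∈ H, E.card = k

/-- A hypergraph is 2-contractible if every edge contains at least two vertices of degree 1. -/
def TwoContractible {α : Type} [DecidableEq α] (H : Finset (Finset α)) : Prop :=
  ∀ E ∈ H, 2 ≤ (E.filter fun v => vdeg H v = 1).card

/-- `S` is a cross-cut of `H`: every edge meets `S` in exactly one vertex. -/
def IsCrosscut {α : Type} [DecidableEq α] (H : Finset (Finset α)) (S : Finset α) : Prop :=
  ∀ E ∈ H, (E ∩ S).card = 1

/-- `σ` is the cross-cut number of `H`: the minimum size of a cross-cut. -/
def IsCrosscutNumber {α : Type} [DecidableEq α] (H : Finset (Finset α)) (σ : ℕ) : Prop :=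
  IsLeast {m | ∃ S : Finset α, IsCrosscut H S ∧ S.card = m} σ

/-- A hypergraph is `ℓ`-overlapping if any two distinct edges meet in at most `ℓ` vertices. -/
def Overlapping {α : Type} [DecidableEq α] (ℓ : ℕ) (H : Finset (Finset α)) : Prop :=
  ∀ E ∈ H, ∀ F ∈ H, E ≠ F → (E ∩ F).card ≤ ℓ

/-- `K` is (the edge set of) a copy of `H`, i.e. the image of `H` under a map that is
injective on the vertex set of `H`. -/
def IsCopyOf {α : Type} [DecidableEq α] (H : Finset (Finset α)) (K : Finset (Finset ℕ)) : Prop :=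
  ∃ φ : α → ℕ, Set.InjOn φ ↑(vertexSet H) ∧ K = H.image fun E => E.image φ

/-- `F` contains no subgraph isomorphic to `H`. -/
def HFree {α : Type} [DecidableEq α] (H : Finset (Finset α)) (F : Finset (Finset ℕ)) : Prop :=
  ∀ K ⊆ F, ¬ IsCopyOf H K

/-- The collection of copies of `H` in `F` (as distinct subgraphs of `F`). -/
noncomputable def copies {α : Type} [DecidableEq α] (H : Finset (Finset α))
    (F : Finset (Finset ℕ)) : Finset (Finset (Finset ℕ)) :=
  F.powerset.filter (IsCopyOf H)

/-- The number of `H`-free `k`-graphs on the vertex set `[n]`. -/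
noncomputable def forb {α : Type} [DecidableEq α] (n k : ℕ) (H : Finset (Finset α)) : ℕ :=
  (((vtx n).powersetCard k).powerset.filter (HFree H)).card

/-- `H` is a `k`-uniform linear cycle of length `ℓ`. -/
def IsLinearCycle {α : Type} [DecidableEq α] (k ℓ : ℕ) (H : Finset (Finset α)) : Prop :=
  ∃ E : ℕ → Finset α,
    (∀ i < ℓ, (E i).card = k) ∧
    (∀ i < ℓ, ∀ j < ℓ, i ≠ j → E i ≠ E j) ∧
    (∀ i < ℓ, (E i ∩ E ((i + 1) % ℓ)).card = 1) ∧
    (∀ i < ℓ, ∀ j < ℓ, i ≠ j → E i ∩ E ((i + 1) % ℓ) ≠ E j ∩ E ((j + 1) % ℓ)) ∧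
    (∀ i < ℓ, ∀ j < ℓ, i ≠ j → (i + 1) % ℓ ≠ j → (j + 1) % ℓ ≠ i → Disjoint (E i) (E j)) ∧
    H = (Finset.range ℓ).image E

/-- `(X 0, …, X (k-1))` is a `k`-partition of `F`. -/
def IsKPartition (k : ℕ) (F : Finset (Finset ℕ)) (X : Fin k → Finset ℕ) : Prop :=
  (∀ i j, i ≠ j → Disjoint (X i) (X j)) ∧ ∀ E ∈ F, ∀ i, (E ∩ X i).card = 1

/-- The `J`-projection of an edge. -/
def projJ {k : ℕ} (X : Fin k → Finset ℕ) (J : Finset (Fin k)) (E : Finset ℕ) : Finset ℕ :=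
  E ∩ J.sup X

/-- The pattern of a vertex set. -/
def pattern {k : ℕ} (X : Fin k → Finset ℕ) (D : Finset ℕ) : Finset (Fin k) :=
  Finset.univ.filter fun i => (D ∩ X i).Nonempty

/-- `MI(F)`: the patterns of intersections of pairs of distinct edges. -/
noncomputable def MI {k : ℕ} (F : Finset (Finset ℕ)) (X : Fin k → Finset ℕ) :
    Finset (Finset (Fin k)) :=
  ((F ×ˢ F).filter fun p => p.1 ≠ p.2).image fun p => pattern X (p.1 ∩ p.2)

/-- The link of a vertex set `D` in `F`. -/
def link {α : Type} [DecidableEq α] (F : Finset (Finset α)) (D : Finset α) :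
    Finset (Finset α) :=
  (F.filter fun E => D ⊆ E).image fun E => E \ D

/-- The degree of a vertex set `D` in `F`: the size of its link. -/
def setDeg {α : Type} [DecidableEq α] (F : Finset (Finset α)) (D : Finset α) : ℕ :=
  (link F D).card

/-- A nonempty hypergraph is `s`-diverse if every vertex has degree less than `|H|/s`. -/
def SDiverse {α : Type} [DecidableEq α] (s : ℕ) (H : Finset (Finset α)) : Prop :=
  H.Nonempty ∧ ∀ v : α, s * vdeg H v < H.card

/-- `D` is `s`-strong in `F` if its link is `s`-diverse. -/
def SStrong {α : Type} [DecidableEq α] (s : ℕ) (F : Finset (Finset α)) (D : Finset α) : Prop :=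
  SDiverse s (link F D)

/-- `F`, with `k`-partition `X`, is `s`-super-homogeneous: for every `J ∈ MI(F)` and every
edge `E ∈ F`, the projection `E_J` is `s`-strong and `d_F(E_J) ≥ max{s, |F|/(2k·n^|J|)}`. -/
def SuperHomogeneous (n k s : ℕ) (F : Finset (Finset ℕ)) (X : Fin k → Finset ℕ) : Prop :=
  ∀ J ∈ MI F X, ∀ E ∈ F,
    SStrong s F (projJ X J E) ∧
    s ≤ setDeg F (projJ X J E) ∧
    (F.card : ℝ) / (2 * k * (n : ℝ) ^ J.card) ≤ (setDeg F (projJ X J E) : ℝ)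

/-- The rank of a family of subsets of `[k]`: the minimum size of a set `D ⊆ [k]` contained
in no member of the family. -/
noncomputable def rankFam (k : ℕ) (𝒥 : Finset (Finset (Fin k))) : ℕ :=
  sInf {d | ∃ D : Finset (Fin k), D.card = d ∧ ∀ J ∈ 𝒥, ¬ D ⊆ J}

/-- A family of subsets of `[k]` is of type 1 if it contains the full power set of some
`(k-2)`-set `B`. -/
def TypeOne (k : ℕ) (𝒥 : Finset (Finset (Fin k))) : Prop :=
  ∃ B : Finset (Fin k), B.card = k - 2 ∧ ∀ S ⊆ B, S ∈ 𝒥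

/-- The constant `c(k,s) = k!/(k^k·(2s(1+2^k))^(2^k))`. -/
noncomputable def cks (k s : ℕ) : ℝ :=
  (Nat.factorial k : ℝ) / ((k : ℝ) ^ k * (2 * (s : ℝ) * (1 + 2 ^ k)) ^ (2 ^ k))

/-- Degree of a set of vertices in a (uniform) hypergraph `K`: number of edges containing it. -/
def uDeg {α : Type} [DecidableEq α] (K : Finset (Finset α)) (S : Finset α) : ℕ :=
  (K.filter fun e => S ⊆ e).card

/-- A `t`-uniform hypergraph is `d`-graded if `d_K(S) ≤ d^(t-|S|)` for all `S` with
`1 ≤ |S| ≤ t`. -/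
def Graded {α : Type} [DecidableEq α] (t : ℕ) (d : ℝ) (K : Finset (Finset α)) : Prop :=
  ∀ S : Finset α, 1 ≤ S.card → S.card ≤ t → (uDeg K S : ℝ) ≤ d ^ (t - S.card)

/-- `S` is saturated by `K`: `d_K(S) = ⌊d^(t-|S|)⌋`. -/
def Saturated {α : Type} [DecidableEq α] (t : ℕ) (d : ℝ) (K : Finset (Finset α))
    (S : Finset α) : Prop :=
  uDeg K S = ⌊d ^ (t - S.card)⌋₊

/-- `S` is admissible: no nonempty subset of `S` is saturated. -/
def Admissible {α : Type} [DecidableEq α] (t : ℕ) (d : ℝ) (K : Finset (Finset α))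
    (S : Finset α) : Prop :=
  ∀ S' ⊆ S, S'.Nonempty → ¬ Saturated t d K S'

/-- `Z_K(S)`: the vertices `v` such that `S ∪ {v}` is inadmissible and `{v}` is not
saturated. -/
noncomputable def Zset {α : Type} [DecidableEq α] (t : ℕ) (d : ℝ) (K : Finset (Finset α))
    (S : Finset α) : Finset α :=
  (vertexSet K).filter fun v => ¬ Admissible t d K (insert v S) ∧ ¬ Saturated t d K {v}

/-- `ex(G,H)`: the maximum number of edges of an `H`-free subgraph of `G`. -/
noncomputable def exIn {α : Type} [DecidableEq α] (H : Finset (Finset α))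
    (G : Finset (Finset ℕ)) : ℕ :=
  (G.powerset.filter (HFree H)).sup Finset.card

/-- The probability, in the random `k`-graph `G^(k)(n,p)` (each `k`-subset of `[n]` is an
edge independently with probability `p`), of the event `A`. -/
noncomputable def probEvent (k n : ℕ) (p : ℝ) (A : Finset (Finset ℕ) → Prop) : ℝ :=
  ∑ G ∈ ((vtx n).powersetCard k).powerset.filter A,
    p ^ G.card * (1 - p) ^ (((vtx n).powersetCard k).card - G.card)

/-!
A hypertree is embedded greedily, edge by edge along its recursive construction; this gives the
right number of embeddings into any family of edges in which every small set inside an edge lies in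
many edges, only a small part of which meets a given further vertex. It remains to find such a
family. Delete from `F`, as long as possible, all edges through a set of at most `k - 2` vertices
of too small degree or through a `(k - 1)`-set of bounded degree.

If something is left, the large degrees yield of order `a ^ t * n ^ (s - t)` embeddings. If
everything is deleted, then, since `a` exceeds `σ - 1`, it must be bounded and a positive
proportion of all `(k - 1)`-sets `D` have at least `σ` neighbors. Choose `σ` neighbors for each such
`D`. Either, for a positive proportion of the `D`, there are a neighbor `x` and a vertex `u` of `D`
such that few of these sets share both `D \ {u}` and `x`; then `D \ {u}` plays the role of an edge
of `H` without two of its vertices of degree 1, which are sent to `u` and `x`. Or the choices for at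
least half of the `D` come from boundedly many vertices, and by pigeonhole a positive proportion of
the `D` have `σ` common neighbors; these host a minimum cross-cut `S`, while the `(k - 1)`-tree
obtained by removing `S` is embedded into the sets `D`. Finally, at most `s ^ s` embeddings have the
same image.
-/

section Counting

variable {ι κ : Type*}

/-- Peeling: as long as some label `x` is `R`-related to an element but to fewer than `θ x`
elements, delete these elements and record `x` as their label `c`. -/
theorem exists_peeling [Nonempty κ] [DecidableEq ι] [DecidableEq κ] (R : ι → κ → Prop)
    [∀ x, DecidablePred (R · x)] {θ : κ → ℝ} (hθ : ∀ x, 0 ≤ θ x)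
    (Q : Finset ι) :
    ∃ Q' ⊆ Q, ∃ c : ι → κ, (∀ q ∈ Q', ∀ x, R q x → θ x ≤ #{p ∈ Q' | R p x}) ∧
      (∀ q ∈ Q \ Q', R q (c q)) ∧ ∀ x, (#{q ∈ Q \ Q' | c q = x} : ℝ) ≤ θ x := by
  induction Q using Finset.strongInduction with
  | H Q ih =>
    by_cases hdone : ∀ q ∈ Q, ∀ x, R q x → θ x ≤ #{p ∈ Q | R p x}
    · exact ⟨Q, Subset.rfl, fun _ => Classical.arbitrary κ, hdone, by simp, by simpa using hθ⟩
    push Not at hdone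
    obtain ⟨q₀, hq₀, x₀, hR, hlt⟩ := hdone
    obtain ⟨Q', hQ', c, hdeg, hc, hfibre⟩ := ih {q ∈ Q | ¬ R q x₀}
      (filter_ssubset.2 ⟨q₀, hq₀, not_not.2 hR⟩)
    let c' : ι → κ := fun q => if R q x₀ then x₀ else c q
    have hmem : ∀ {q}, q ∈ Q \ Q' → ¬ R q x₀ → q ∈ {q ∈ Q | ¬ R q x₀} \ Q' :=
      fun hq hqx => mem_sdiff.2
        ⟨mem_filter.2 ⟨(mem_sdiff.1 hq).1, hqx⟩, (mem_sdiff.1 hq).2⟩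
    refine ⟨Q', hQ'.trans (filter_subset _ _), c', hdeg, fun q hq => ?_, fun x => ?_⟩
    · by_cases hqx : R q x₀
      · simpa only [c', if_pos hqx] using hqx
      · simpa only [c', if_neg hqx] using hc q (hmem hq hqx)
    by_cases hx : x = x₀
    · subst hx
      refine le_trans (Nat.cast_le.2 (card_le_card fun q hq => ?_)) hlt.le
      obtain ⟨hq, hqx⟩ := mem_filter.1 hq
      refine mem_filter.2 ⟨(mem_sdiff.1 hq).1, by_contra fun hnot => hnot ?_⟩
      simp only [c', if_neg hnot] at hqx
      simpa only [hqx] using hc q (hmem hq hnot)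
    · refine le_trans (Nat.cast_le.2 (card_le_card fun q hq => ?_)) (hfibre x)
      obtain ⟨hq, hqx⟩ := mem_filter.1 hq
      have hnot : ¬ R q x₀ := fun h => hx (by simpa only [c', if_pos h] using hqx.symm)
      simp only [c', if_neg hnot] at hqx
      exact mem_filter.2 ⟨hmem hq hnot, hqx⟩

theorem card_le_two_mul_card_filter_forall_not {Q : Finset ι} {W : Finset κ}
    {bad : ι → κ → Prop} [∀ w, DecidablePred (bad · w)] {s : ℕ} (hs : #W ≤ s)
    (hbad : ∀ w ∈ W, 2 * s * #{q ∈ Q | bad q w} ≤ #Q) :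
    #Q ≤ 2 * #{q ∈ Q | ∀ w ∈ W, ¬ bad q w} := by
  rcases W.eq_empty_or_nonempty with rfl | hW
  · simp; omega
  have hcover : #{q ∈ Q | ¬ ∀ w ∈ W, ¬ bad q w} ≤ ∑ w ∈ W, #{q ∈ Q | bad q w} := by
    refine le_trans (card_le_card fun q hq => ?_) card_biUnion_le
    simp only [mem_filter, not_forall, not_not, mem_biUnion] at hq ⊢
    obtain ⟨hqQ, w, hw, hb⟩ := hq
    exact ⟨w, hw, hqQ, hb⟩
  have hsum : 2 * s * ∑ w ∈ W, #{q ∈ Q | bad q w} ≤ s * #Q := by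
    rw [mul_sum]
    exact (sum_le_card_nsmul _ _ _ hbad).trans (Nat.mul_le_mul_right _ hs)
  have hpos : 0 < s := hW.card_pos.trans_le hs
  have hhalf : 2 * #{q ∈ Q | ¬ ∀ w ∈ W, ¬ bad q w} ≤ #Q := by
    refine Nat.le_of_mul_le_mul_left (le_trans ?_ hsum) hpos
    calc s * (2 * #{q ∈ Q | ¬ ∀ w ∈ W, ¬ bad q w})
        = 2 * s * #{q ∈ Q | ¬ ∀ w ∈ W, ¬ bad q w} := by ring
      _ ≤ _ := Nat.mul_le_mul_left _ hcover
  have hsplit := card_filter_add_card_filter_not (s := Q) (fun q => ∀ w ∈ W, ¬ bad q w)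
  omega

theorem card_le_pow_of_forall_superset {β : Type*} {r : ℕ} {X Y : Finset β}
    {G : Finset (Finset β)} (hG : ∀ D ∈ G, D ⊆ X ∧ #D = r ∧ Y ⊆ D) : #G ≤ #X ^ (r - #Y) := by
  refine le_trans ?_ (Nat.choose_le_pow (#X) (r - #Y))
  rw [← card_powersetCard]
  refine card_le_card_of_injOn (· \ Y) (fun D hD => ?_) fun D hD D' hD' h => ?_
  · obtain ⟨hDX, hDr, hYD⟩ := hG D hD
    exact mem_coe.2 (mem_powersetCard.2
      ⟨sdiff_subset.trans hDX, by rw [card_sdiff_of_subset hYD, hDr]⟩)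
  · rw [← sdiff_union_of_subset (hG D hD).2.2, ← sdiff_union_of_subset (hG D' hD').2.2]
    exact congrArg (· ∪ Y) h

theorem card_filter_superset_mem_le {β : Type*} [DecidableEq β] {r : ℕ} {X A : Finset β}
    {G : Finset (Finset β)} (hG : ∀ D ∈ G, D ⊆ X ∧ #D = r) {w : β} (hw : w ∉ A) :
    #{D ∈ G | A ⊆ D ∧ w ∈ D} ≤ #X ^ (r - 1 - #A) := by
  rw [show r - 1 - #A = r - #(insert w A) by rw [card_insert_of_notMem hw]; omega]
  refine card_le_pow_of_forall_superset fun D hD => ?_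
  obtain ⟨hDG, hAD, hwD⟩ := mem_filter.1 hD
  exact ⟨(hG D hDG).1, (hG D hDG).2, insert_subset hwD hAD⟩

theorem card_le_mul_pow_of_card_label_eq {β : Type*} [DecidableEq β] {Q : Finset ι}
    {c : ι → Finset β} {X : Finset β} {d : ℝ} {r j : ℕ} (hj : j ≤ r)
    (hc : ∀ q ∈ Q, c q ⊆ X ∧ #(c q) = j)
    (hfibre : ∀ A, #A = j → (#{q ∈ Q | c q = A} : ℝ) ≤ d * (#X : ℝ) ^ (r - j))
    (hd : 0 ≤ d) :
    (#Q : ℝ) ≤ d * (#X : ℝ) ^ r := by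
  have hmaps : ∀ q ∈ Q, c q ∈ X.powersetCard j := fun q hq => mem_powersetCard.2 (hc q hq)
  have hcard : (#(X.powersetCard j) : ℝ) ≤ (#X : ℝ) ^ j := by
    rw [card_powersetCard]
    exact_mod_cast Nat.choose_le_pow (#X) j
  calc (#Q : ℝ) = ∑ A ∈ X.powersetCard j, (#{q ∈ Q | c q = A} : ℝ) := by
        rw [card_eq_sum_card_fiberwise hmaps, Nat.cast_sum]
    _ ≤ #(X.powersetCard j) * (d * (#X : ℝ) ^ (r - j)) := by
        rw [← nsmul_eq_mul]
        exact sum_le_card_nsmul _ _ _ fun A hA => hfibre A (mem_powersetCard.1 hA).2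
    _ ≤ (#X : ℝ) ^ j * (d * (#X : ℝ) ^ (r - j)) := by gcongr
    _ = d * (#X : ℝ) ^ r := by rw [mul_left_comm, ← pow_add, Nat.add_sub_cancel' hj]

theorem card_le_mul_pow_of_card_label_lt {β : Type*} [DecidableEq β] {Q : Finset ι}
    {c : ι → Finset β} {X : Finset β} {d : ℝ} {r m : ℕ} (hm : m ≤ r + 1)
    (hc : ∀ q ∈ Q, c q ⊆ X ∧ #(c q) < m)
    (hfibre : ∀ A, #A < m → (#{q ∈ Q | c q = A} : ℝ) ≤ d * (#X : ℝ) ^ (r - #A))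
    (hd : 0 ≤ d) :
    (#Q : ℝ) ≤ m * (d * (#X : ℝ) ^ r) := by
  have hmaps : ∀ q ∈ Q, #(c q) ∈ range m := fun q hq => mem_range.2 (hc q hq).2
  rw [card_eq_sum_card_fiberwise hmaps, Nat.cast_sum, ← nsmul_eq_mul]
  conv_rhs => rw [← card_range m]
  refine sum_le_card_nsmul _ _ _ fun j hj => ?_
  rw [mem_range] at hj
  refine card_le_mul_pow_of_card_label_eq (c := c) (j := j) (by omega)
    (fun q hq => ?_) (fun A hA => ?_) hd
  · obtain ⟨hqQ, hqj⟩ := mem_filter.1 hq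
    exact ⟨(hc q hqQ).1, hqj⟩
  · subst hA
    refine le_trans (Nat.cast_le.2 (card_le_card ?_)) (hfibre A hj)
    exact filter_subset_filter _ (filter_subset _ _)

end Counting

section Uniform

variable {α : Type} [DecidableEq α]

theorem mem_vertexSet {H : Finset (Finset α)} {v : α} : v ∈ vertexSet H ↔ ∃ E ∈ H, v ∈ E := by
  simp only [vertexSet, Finset.mem_sup, id_eq]

theorem subset_vertexSet {H : Finset (Finset α)} {E : Finset α} (hE : E ∈ H) :
    E ⊆ vertexSet H :=
  fun _ hv => mem_vertexSet.2 ⟨E, hE, hv⟩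

theorem vertexSet_insert (H : Finset (Finset α)) (E : Finset α) :
    vertexSet (insert E H) = E ∪ vertexSet H := by
  simp only [vertexSet, sup_insert, id_eq, sup_eq_union]

/-- The neighbors of a set `D` in `F`: the vertices `y ∉ D` such that `D ∪ {y}` is an edge. -/
noncomputable def neighbors (F : Finset (Finset α)) (D : Finset α) : Finset α :=
  {y ∈ vertexSet F | y ∉ D ∧ insert y D ∈ F}

theorem mem_neighbors {F : Finset (Finset α)} {D : Finset α} {y : α} :
    y ∈ neighbors F D ↔ y ∉ D ∧ insert y D ∈ F := by
  simp only [neighbors, mem_filter, and_iff_right_iff_imp]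
  exact fun h => subset_vertexSet h.2 (mem_insert_self y D)

theorem card_filter_superset_eq_card_neighbors {G : Finset (Finset α)} {B : Finset α}
    (hG : ∀ E ∈ G, #E = #B + 1) : #{E ∈ G | B ⊆ E} = #(neighbors G B) := by
  have himage : {E ∈ G | B ⊆ E} = (neighbors G B).image (insert · B) := by
    ext E
    simp only [mem_filter, mem_image, mem_neighbors]
    constructor
    · rintro ⟨hE, hBE⟩
      obtain ⟨y, hy, rfl⟩ := exists_eq_insert_iff.2 ⟨hBE, (hG E hE).symm⟩
      exact ⟨y, ⟨hy, hE⟩, rfl⟩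
    · rintro ⟨y, ⟨-, hE⟩, rfl⟩
      exact ⟨hE, subset_insert y B⟩
  rw [himage, card_image_of_injOn fun y hy z _ h => ?_]
  exact ((mem_insert.1 (h ▸ mem_insert_self y B)).resolve_right (mem_neighbors.1 hy).1)

theorem exists_subfamily_forall_le_card_superset {ι : Type*} {Q : Finset ι} {B : ι → Finset α}
    {X : Finset α} {r : ℕ} {d : ℝ} (hd : 0 ≤ d) (hB : ∀ i ∈ Q, B i ⊆ X ∧ #(B i) ≤ r)
    (hQ : (r + 1) * (d * (#X : ℝ) ^ r) < #Q) :
    ∃ Q' ⊆ Q, Q'.Nonempty ∧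
      ∀ i ∈ Q', ∀ A ⊆ B i, d * (#X : ℝ) ^ (r - #A) ≤ #{j ∈ Q' | A ⊆ B j} := by
  obtain ⟨Q', hQ', c, hdeg, hc, hfibre⟩ := exists_peeling (fun i A => A ⊆ B i)
    (θ := fun A => d * (#X : ℝ) ^ (r - #A)) (fun A => by positivity) Q
  refine ⟨Q', hQ', nonempty_iff_ne_empty.2 ?_, hdeg⟩
  rintro rfl
  rw [sdiff_empty] at hc hfibre
  refine hQ.not_ge ?_
  exact_mod_cast card_le_mul_pow_of_card_label_lt le_rfl (fun i hi =>
    ⟨(hc i hi).trans (hB i hi).1,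
      Nat.lt_succ_of_le ((card_le_card (hc i hi)).trans (hB i hi).2)⟩)
    (fun A _ => hfibre A) hd

theorem pow_le_mul_card_superset {r : ℕ} {G : Finset (Finset α)} (hG : ∀ D ∈ G, #D = r) {m : ℝ}
    (hm : 0 ≤ m) (hdeg : ∀ D ∈ G, ∀ u ∈ D, m ≤ #{D' ∈ G | D.erase u ⊆ D'}) {i : ℕ}
    {A D : Finset α} (hD : D ∈ G) (hA : A ⊆ D) (hi : #A + i = r) :
    m ^ i ≤ (r : ℝ) ^ i * #{D' ∈ G | A ⊆ D'} := by
  induction i generalizing A D with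
  | zero =>
    simpa only [pow_zero, one_mul, Nat.one_le_cast, one_le_card] using
      ⟨D, mem_filter.2 ⟨hD, hA⟩⟩
  | succ i ih =>
    obtain ⟨v, hvD, hvA⟩ := exists_mem_notMem_of_card_lt_card
      (show #A < #D by rw [hG D hD]; omega)
    have hAB : A ⊆ D.erase v := subset_erase.2 ⟨hA, hvA⟩
    have hN : m ≤ #(neighbors G (D.erase v)) := by
      rw [← card_filter_superset_eq_card_neighbors]
      · exact hdeg D hD v hvD
      · intro E hE
        rw [hG E hE, card_erase_add_one hvD, hG D hD]
    have hstep : ∀ w ∈ neighbors G (D.erase v),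
        m ^ i ≤ (r : ℝ) ^ i * #{D' ∈ {D' ∈ G | A ⊆ D'} | w ∈ D'} := by
      intro w hw
      obtain ⟨hwB, hwG⟩ := mem_neighbors.1 hw
      have hwA : #(insert w A) + i = r := by
        rw [card_insert_of_notMem fun h => hwB (hAB h)]; omega
      simpa only [filter_filter, insert_subset_iff, and_comm] using
        ih hwG (insert_subset_insert w hAB) hwA
    have hcount : ∑ w ∈ neighbors G (D.erase v), #{D' ∈ {D' ∈ G | A ⊆ D'} | w ∈ D'}
        ≤ #{D' ∈ G | A ⊆ D'} * r := by
      refine (sum_card_bipartiteAbove_eq_sum_card_bipartiteBelow (· ∈ ·)).trans_le ?_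
      refine sum_le_card_nsmul _ _ _ fun D' hD' => ?_
      rw [← hG D' (mem_filter.1 hD').1]
      exact card_le_card fun w hw => (mem_filter.1 hw).2
    calc m ^ (i + 1) = m * m ^ i := pow_succ' m i
      _ ≤ #(neighbors G (D.erase v)) * m ^ i := by gcongr
      _ ≤ ∑ w ∈ neighbors G (D.erase v), (r : ℝ) ^ i * #{D' ∈ {D' ∈ G | A ⊆ D'} | w ∈ D'} := by
        rw [← nsmul_eq_mul]
        exact card_nsmul_le_sum _ _ _ hstep
      _ ≤ (r : ℝ) ^ i * (#{D' ∈ G | A ⊆ D'} * r) := by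
        rw [← mul_sum]
        gcongr
        exact_mod_cast hcount
      _ = (r : ℝ) ^ (i + 1) * #{D' ∈ G | A ⊆ D'} := by ring

theorem mul_card_superset_mem_le {k m : ℕ} {G : Finset (Finset α)} (hG : ∀ E ∈ G, #E = k)
    (hdeg : ∀ E ∈ G, ∀ w ∈ E, m * k + 1 ≤ #{E' ∈ G | E.erase w ⊆ E'}) {A : Finset α} {w : α}
    (hw : w ∉ A) : m * #{E ∈ G | A ⊆ E ∧ w ∈ E} ≤ #{E ∈ G | A ⊆ E} := by
  rcases Nat.eq_zero_or_pos k with rfl | hk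
  · have hempty : {E ∈ G | A ⊆ E ∧ w ∈ E} = ∅ := filter_eq_empty_iff.2 fun E hE h => by
      simp [card_eq_zero.1 (hG E hE)] at h
    simp [hempty]
  refine Nat.le_of_mul_le_mul_right (c := k) ?_ hk
  rw [mul_comm m, mul_assoc]
  refine card_mul_le_card_mul (fun E E' => w ∉ E' ∧ E.erase w ⊆ E') (fun E hE => ?_)
    fun E' hE' => ?_
  · obtain ⟨hEG, hAE, hwE⟩ := mem_filter.1 hE
    refine Nat.le_of_add_le_add_right ((hdeg E hEG w hwE).trans ?_)
    refine (card_le_card (t := insert E _) fun E' hE' => ?_).trans (card_insert_le _ _)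
    obtain ⟨hE'G, hsub⟩ := mem_filter.1 hE'
    by_cases hwE' : w ∈ E'
    · have hEE' : E ⊆ E' := by
        rw [← insert_erase hwE]
        exact insert_subset hwE' hsub
      exact mem_insert.2 (.inl (eq_of_subset_of_card_le hEE' (by rw [hG E hEG, hG E' hE'G])).symm)
    · exact mem_insert_of_mem (mem_filter.2 ⟨mem_filter.2
        ⟨hE'G, (subset_erase.2 ⟨hAE, hw⟩).trans hsub⟩, hwE', hsub⟩)
  · obtain ⟨hE'G, -⟩ := mem_filter.1 hE'
    rw [← hG E' hE'G]
    refine (card_le_card (t := E'.image fun y => insert w (E'.erase y)) fun E hE => ?_).trans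
      card_image_le
    obtain ⟨hE, -, hsub⟩ := mem_filter.1 hE
    obtain ⟨hEG, -, hwE⟩ := mem_filter.1 hE
    have hcard : #(E.erase w) + 1 = #E' := by rw [card_erase_add_one hwE, hG E hEG, hG E' hE'G]
    obtain ⟨y, hy, hE'eq⟩ := exists_eq_insert_iff.2 ⟨hsub, hcard⟩
    refine mem_image.2 ⟨y, hE'eq ▸ mem_insert_self y _, ?_⟩
    rw [← hE'eq, erase_insert hy, insert_erase hwE]

end Uniform

section Hypertree

variable {α : Type} [DecidableEq α] {H : Finset (Finset α)} {E F S : Finset α} {k : ℕ}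

theorem card_vtx (n : ℕ) : #(vtx n) = n := by simp [vtx]

theorem eq_of_vdeg_eq_one {v : α} (hv : vdeg H v = 1) (hE : E ∈ H) (hvE : v ∈ E) (hF : F ∈ H)
    (hvF : v ∈ F) : F = E :=
  card_le_one.1 hv.le F (mem_filter.2 ⟨hF, hvF⟩) E (mem_filter.2 ⟨hE, hvE⟩)

namespace TwoContractible

theorem exists_pair (h2 : TwoContractible H) (hE : E ∈ H) :
    ∃ p ∈ E, ∃ q ∈ E, p ≠ q ∧ vdeg H p = 1 ∧ vdeg H q = 1 := by
  obtain ⟨p, hp, q, hq, hpq⟩ := one_lt_card.1 (h2 E hE)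
  rw [mem_filter] at hp hq
  exact ⟨p, hp.1, q, hq.1, hpq, hp.2, hq.2⟩

theorem overlapping (h2 : TwoContractible H) (hH : ∀ E ∈ H, #E = k) : Overlapping (k - 2) H := by
  intro E hE F hF hne
  have hdisj : Disjoint (E ∩ F) {v ∈ E | vdeg H v = 1} := disjoint_left.2 fun v hv hv1 =>
    hne (eq_of_vdeg_eq_one (mem_filter.1 hv1).2 hF (mem_inter.1 hv).2 hE (mem_inter.1 hv).1)
  have hle := card_le_card (union_subset inter_subset_left (filter_subset _ _) :
    E ∩ F ∪ {v ∈ E | vdeg H v = 1} ⊆ E)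
  rw [card_union_of_disjoint hdisj, hH E hE] at hle
  have := h2 E hE
  omega

theorem card_le_card_vertexSet (h2 : TwoContractible H) : #H ≤ #(vertexSet H) := by
  have hprivate : ∀ E : H, ∃ v ∈ E.1, vdeg H v = 1 := fun E =>
    let ⟨p, hp, _, _, _, hp1, _⟩ := h2.exists_pair E.2
    ⟨p, hp, hp1⟩
  choose v hvE hv1 using hprivate
  rw [← card_attach]
  refine card_le_card_of_injOn v (fun E _ => subset_vertexSet E.2 (hvE E)) fun E _ F _ h => ?_
  exact Subtype.ext (eq_of_vdeg_eq_one (hv1 F) F.2 (hvE F) E.2 (h ▸ hvE E))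

theorem two_le (h2 : TwoContractible H) (hH : ∀ E ∈ H, #E = k) (hne : H.Nonempty) : 2 ≤ k := by
  obtain ⟨E, hE⟩ := hne
  exact (h2 E hE).trans ((card_filter_le _ _).trans (hH E hE).le)

theorem injOn_sdiff (h2 : TwoContractible H) (hS : IsCrosscut H S) :
    Set.InjOn (· \ S) (H : Set (Finset α)) := by
  intro E hE F hF h
  obtain ⟨p, hp, q, hq, hpq, hp1, hq1⟩ := h2.exists_pair hE
  have hmem : ∀ v ∈ E, v ∉ S → v ∈ F := fun v hv hvS =>
    (mem_sdiff.1 ((congrArg (v ∈ ·) h).mp (mem_sdiff.2 ⟨hv, hvS⟩))).1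
  by_cases hpS : p ∈ S
  · have hqS : q ∉ S := fun hqS => hpq
      (card_le_one.1 (hS E hE).le p (mem_inter.2 ⟨hp, hpS⟩) q (mem_inter.2 ⟨hq, hqS⟩))
    exact (eq_of_vdeg_eq_one hq1 hE hq hF (hmem q hq hqS)).symm
  · exact (eq_of_vdeg_eq_one hp1 hE hp hF (hmem p hp hpS)).symm

end TwoContractible

theorem vertexSet_image_sdiff (H : Finset (Finset α)) (S : Finset α) :
    vertexSet (H.image (· \ S)) = vertexSet H \ S := by
  ext v
  simp only [mem_vertexSet, mem_image, Finset.mem_sdiff, exists_exists_and_eq_and]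
  grind

namespace IsHypertree

theorem nonempty (hH : IsHypertree H) : H.Nonempty := by
  cases hH with
  | single E => exact singleton_nonempty E
  | grow E F => exact insert_nonempty _ _

theorem image_sdiff (hH : IsHypertree H) (hinj : Set.InjOn (· \ S) (H : Set (Finset α))) :
    IsHypertree (H.image (· \ S)) := by
  induction hH with
  | single E => simpa only [image_singleton] using single (E \ S)
  | @grow H E F _ hE hF hint ih =>
    rw [coe_insert] at hinj
    rw [image_insert]
    refine grow (E \ S) (F \ S) (ih (hinj.mono (Set.subset_insert _ _))) (fun hmem => ?_)
      (mem_image_of_mem _ hF) ?_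
    · obtain ⟨E', hE', h⟩ := mem_image.1 hmem
      exact hE (hinj (Set.mem_insert_of_mem _ hE') (Set.mem_insert _ _) h ▸ hE')
    · rw [vertexSet_image_sdiff]
      exact inf_sdiff.symm.trans ((congrArg (· \ S) hint).trans inf_sdiff)

end IsHypertree

namespace IsCrosscut

theorem nonempty (hS : IsCrosscut H S) (hne : H.Nonempty) : S.Nonempty := by
  obtain ⟨E, hE⟩ := hne
  exact (card_pos.1 (hS E hE ▸ Nat.one_pos)).mono inter_subset_right

theorem card_sdiff (hS : IsCrosscut H S) (hE : E ∈ H) : #(E \ S) = #E - 1 := by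
  rw [Finset.card_sdiff, inter_comm, hS E hE]

theorem card_vertexSet_inter_le (hS : IsCrosscut H S) : #(vertexSet H ∩ S) ≤ #H := by
  have hcover : vertexSet H ∩ S ⊆ H.biUnion (· ∩ S) := fun v hv => by
    obtain ⟨hvH, hvS⟩ := mem_inter.1 hv
    obtain ⟨E, hE, hvE⟩ := mem_vertexSet.1 hvH
    exact mem_biUnion.2 ⟨E, hE, mem_inter.2 ⟨hvE, hvS⟩⟩
  refine (card_le_card hcover).trans ?_
  simpa only [mul_one] using card_biUnion_le_card_mul H (· ∩ S) 1 fun E hE => (hS E hE).le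

end IsCrosscut

end Hypertree

section Embeddings

variable {α : Type}

/-- The maps sending `V` into `X` and vanishing off `V`: the finite set standing for `V → X`. -/
noncomputable def mapsOn (V : Finset α) (X : Finset ℕ) : Finset (α → ℕ) :=
  (V.finsupp fun _ => X).map ⟨(⇑), DFunLike.coe_injective⟩

theorem mem_mapsOn {V : Finset α} {X : Finset ℕ} {f : α → ℕ} :
    f ∈ mapsOn V X ↔ (∀ v ∈ V, f v ∈ X) ∧ ∀ v ∉ V, f v = 0 := by
  simp only [mapsOn, Finset.mem_map, mem_finsupp_iff, Function.Embedding.coeFn_mk]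
  constructor
  · rintro ⟨g, ⟨hsupp, hg⟩, rfl⟩
    exact ⟨hg, fun v hv => Finsupp.notMem_support_iff.1 fun h => hv (hsupp h)⟩
  · rintro ⟨hX, hzero⟩
    have hsupp : ∀ v, f v ≠ 0 → v ∈ V := fun v hv => by_contra fun h => hv (hzero v h)
    exact ⟨Finsupp.onFinset V f hsupp, ⟨Finsupp.support_onFinset_subset, hX⟩, rfl⟩

theorem card_mapsOn (V : Finset α) (X : Finset ℕ) : #(mapsOn V X) = #X ^ #V := by
  rw [mapsOn, card_map, card_finsupp, prod_const]

variable [DecidableEq α] {H : Finset (Finset α)} {F : Finset (Finset ℕ)}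

/-- The embeddings of `H` into `F`, as maps vanishing off the vertex set of `H`. -/
noncomputable def embeddings (H : Finset (Finset α)) (F : Finset (Finset ℕ)) :
    Finset (α → ℕ) :=
  {φ ∈ mapsOn (vertexSet H) (vertexSet F) |
    Set.InjOn φ (vertexSet H) ∧ ∀ E ∈ H, E.image φ ∈ F}

theorem mem_embeddings {φ : α → ℕ} : φ ∈ embeddings H F ↔
    Set.InjOn φ (vertexSet H) ∧ (∀ E ∈ H, E.image φ ∈ F) ∧ ∀ v ∉ vertexSet H, φ v = 0 := by
  rw [embeddings, mem_filter, mem_mapsOn]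
  refine ⟨fun ⟨⟨_, hzero⟩, hinj, hE⟩ => ⟨hinj, hE, hzero⟩, fun ⟨hinj, hE, hzero⟩ =>
    ⟨⟨fun v hv => ?_, hzero⟩, hinj, hE⟩⟩
  obtain ⟨E, hEH, hvE⟩ := mem_vertexSet.1 hv
  exact subset_vertexSet (hE E hEH) (mem_image_of_mem φ hvE)

theorem vertexSet_image_image (H : Finset (Finset α)) (φ : α → ℕ) :
    vertexSet (H.image (Finset.image φ)) = (vertexSet H).image φ := by
  ext y
  simp only [mem_vertexSet, mem_image, exists_exists_and_eq_and]
  grind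

theorem IsCopyOf.card_vertexSet_le {K : Finset (Finset ℕ)} (hK : IsCopyOf H K) :
    #(vertexSet K) ≤ #(vertexSet H) := by
  obtain ⟨φ, -, rfl⟩ := hK
  exact (congrArg card (vertexSet_image_image H φ)).trans_le card_image_le

theorem mem_mapsOn_vertexSet_image {φ : α → ℕ} (hφ : φ ∈ embeddings H F) :
    φ ∈ mapsOn (vertexSet H) (vertexSet (H.image (Finset.image φ))) := by
  rw [vertexSet_image_image]
  exact mem_mapsOn.2 ⟨fun v hv => mem_image_of_mem φ hv, (mem_embeddings.1 hφ).2.2⟩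

theorem card_embeddings_le (H : Finset (Finset α)) (F : Finset (Finset ℕ)) :
    #(embeddings H F) ≤ #(vertexSet H) ^ #(vertexSet H) * #(copies H F) := by
  have hmaps : ∀ φ ∈ embeddings H F, H.image (Finset.image φ) ∈ copies H F := fun φ hφ => by
    obtain ⟨hinj, hE, -⟩ := mem_embeddings.1 hφ
    exact mem_filter.2 ⟨mem_powerset.2 (image_subset_iff.2 hE), φ, hinj, rfl⟩
  refine card_le_mul_card_image_of_maps_to hmaps _ fun K hK => ?_
  have hKH := (mem_filter.1 hK).2.card_vertexSet_le
  calc #{φ ∈ embeddings H F | H.image (Finset.image φ) = K}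
      ≤ #(mapsOn (vertexSet H) (vertexSet K)) := card_le_card fun φ hφ => by
        rw [mem_filter] at hφ
        exact hφ.2 ▸ mem_mapsOn_vertexSet_image hφ.1
    _ ≤ #(vertexSet H) ^ #(vertexSet H) := by
        rw [card_mapsOn]
        exact Nat.pow_le_pow_left hKH _

end Embeddings

section Greedy

theorem exists_injOn_image_eq {α β : Type*} [DecidableEq β] {C D : Finset α}
    {B : Finset β} (hcard : #D = #B) (hCD : C ⊆ D) {f : α → β} (hf : Set.InjOn f C)
    (hfB : C.image f ⊆ B) : ∃ g : α → β, Set.EqOn g f C ∧ Set.InjOn g D ∧ D.image g = B := by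
  have hmaps : (C.subtype (· ∈ D)).image (fun v : D => f v) ⊆ B := fun w hw => by
    obtain ⟨v, hv, rfl⟩ := mem_image.1 hw
    exact hfB (mem_image_of_mem f (mem_subtype.1 hv))
  have hinj : Set.InjOn (fun v : D => f v) (C.subtype (· ∈ D)) := fun v hv w hw h =>
    Subtype.ext (hf (mem_subtype.1 hv) (mem_subtype.1 hw) h)
  obtain ⟨g, hg⟩ :=
    exists_equiv_extend_of_card_eq ((Fintype.card_coe D).trans hcard) hmaps hinj
  let g' : α → β := fun v => if h : v ∈ D then g ⟨v, h⟩ else f v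
  have hg' : ∀ v (h : v ∈ D), g' v = g ⟨v, h⟩ := fun v h => dif_pos h
  refine ⟨g', fun v hv => ?_, fun v hv w hw h => ?_, ?_⟩
  · exact (hg' v (hCD hv)).trans (hg ⟨v, hCD hv⟩ (mem_subtype.2 hv))
  · rw [hg' v hv, hg' w hw] at h
    exact congrArg Subtype.val (g.injective (Subtype.ext h))
  · ext w
    rw [mem_image]
    constructor
    · rintro ⟨v, hv, rfl⟩
      exact hg' v hv ▸ (g ⟨v, hv⟩).2
    · intro hw
      refine ⟨g.symm ⟨w, hw⟩, (g.symm ⟨w, hw⟩).2, ?_⟩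
      rw [hg' _ (g.symm ⟨w, hw⟩).2, Subtype.coe_eta, Equiv.apply_symm_apply]

/-- A template for embedding a hypergraph edge by edge. An edge `E` of the hypergraph is mapped
by choosing an item `i`: the vertices of `core E` go bijectively to `body i`, and the remaining
vertices `v` of `E` go to the prescribed vertices `label E i v`. -/
structure Template (α ι : Type) where
  items : Finset ι
  core : Finset α → Finset α
  body : ι → Finset ℕ
  label : Finset α → ι → α → ℕ

namespace Template

variable {α ι : Type} [DecidableEq α] (T : Template α ι) {H H₀ : Finset (Finset α)}
  {F : Finset (Finset ℕ)} {E : Finset α} {i : ι}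

/-- The star of `A`: the items whose body contains `A`. -/
noncomputable def star (A : Finset ℕ) : Finset ι := {i ∈ T.items | A ⊆ T.body i}

/-- The image of the edge `E` when it is mapped according to the item `i`. -/
noncomputable def image (E : Finset α) (i : ι) : Finset ℕ :=
  T.body i ∪ (E \ T.core E).image (T.label E i)

/-- The map `φ` sends the edge `E` to its image according to the item `i`. -/
structure Places (E : Finset α) (i : ι) (φ : α → ℕ) : Prop where
  image_core : (T.core E).image φ = T.body i
  eq_label : ∀ v ∈ E \ T.core E, φ v = T.label E i v

/-- Compatibility of a template with a hypergraph `H` to be embedded in `F`: vertices outside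
the cores lie in a single edge of `H`, every item maps every edge of `H` injectively to an edge
of `F`, and items are determined by their body and labels. -/
structure IsCompatible (H : Finset (Finset α)) (F : Finset (Finset ℕ)) : Prop where
  core_subset : ∀ E ∈ H, T.core E ⊆ E
  inter_subset_core : ∀ E ∈ H, ∀ E' ∈ H, E ≠ E' → E ∩ E' ⊆ T.core E
  card_body : ∀ E ∈ H, ∀ i ∈ T.items, #(T.body i) = #(T.core E)
  label_notMem_body : ∀ E ∈ H, ∀ i ∈ T.items, ∀ v ∈ E \ T.core E, T.label E i v ∉ T.body i
  label_injOn : ∀ E ∈ H, ∀ i ∈ T.items, Set.InjOn (T.label E i) (E \ T.core E : Finset α)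
  image_mem : ∀ E ∈ H, ∀ i ∈ T.items, T.image E i ∈ F
  item_ext : ∀ E ∈ H, ∀ i ∈ T.items, ∀ j ∈ T.items, T.body i = T.body j →
    (∀ v ∈ E \ T.core E, T.label E i v = T.label E j v) → i = j

/-- Richness of a template: the star of every set `A` of at most `ℓ` vertices inside a body is
large, and only a small part of it uses a given vertex outside `A`, so that a partial embedding
with at most `s` vertices can be extended greedily. -/
structure IsRich (H : Finset (Finset α)) (ℓ s : ℕ) (N L : ℝ) : Prop where
  nonempty : T.items.Nonempty
  le_card_star : ∀ E ∈ H, ∀ j ∈ T.items, ∀ A ⊆ T.body j, #A ≤ ℓ →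
    2 * L * N ^ (#E - #A) ≤ #(T.star A)
  card_bad_le : ∀ E ∈ H, ∀ j ∈ T.items, ∀ A ⊆ T.body j, #A ≤ ℓ → ∀ w ∉ A,
    2 * s * #{i ∈ T.star A | w ∈ T.image E i} ≤ #(T.star A)

/-- The embeddings of `H` into `F` all of whose edges are mapped according to some item. -/
noncomputable def placements (H : Finset (Finset α)) (F : Finset (Finset ℕ)) :
    Finset (α → ℕ) :=
  {φ ∈ embeddings H F | ∀ E ∈ H, ∃ i ∈ T.items, T.Places E i φ}

variable {T}

theorem Places.image_eq {φ : α → ℕ} (h : T.Places E i φ) (hE : T.core E ⊆ E) :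
    E.image φ = T.image E i := by
  rw [image, ← h.image_core, ← image_congr (f := φ) fun v hv => h.eq_label v hv, ← image_union,
    union_sdiff_of_subset hE]

theorem Places.congr {φ ψ : α → ℕ} (h : T.Places E i ψ) (hE : T.core E ⊆ E)
    (hφψ : ∀ v ∈ E, φ v = ψ v) : T.Places E i φ where
  image_core := by
    rw [← h.image_core]
    exact image_congr fun v hv => hφψ v (hE hv)
  eq_label v hv := (hφψ v (sdiff_subset hv)).trans (h.eq_label v hv)

theorem IsRich.mono {ℓ s : ℕ} {N L : ℝ} (hR : T.IsRich H ℓ s N L) (hH : H₀ ⊆ H) :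
    T.IsRich H₀ ℓ s N L where
  nonempty := hR.nonempty
  le_card_star E hE := hR.le_card_star E (hH hE)
  card_bad_le E hE := hR.card_bad_le E (hH hE)

namespace IsCompatible

theorem mono (hT : T.IsCompatible H F) (hH : H₀ ⊆ H) : T.IsCompatible H₀ F where
  core_subset E hE := hT.core_subset E (hH hE)
  inter_subset_core E hE E' hE' := hT.inter_subset_core E (hH hE) E' (hH hE')
  card_body E hE := hT.card_body E (hH hE)
  label_notMem_body E hE := hT.label_notMem_body E (hH hE)
  label_injOn E hE := hT.label_injOn E (hH hE)
  image_mem E hE := hT.image_mem E (hH hE)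
  item_ext E hE := hT.item_ext E (hH hE)

theorem mem_placements (hT : T.IsCompatible H F) {φ : α → ℕ} :
    φ ∈ T.placements H F ↔ Set.InjOn φ (vertexSet H) ∧
      (∀ E ∈ H, ∃ i ∈ T.items, T.Places E i φ) ∧ ∀ v ∉ vertexSet H, φ v = 0 := by
  rw [placements, mem_filter, mem_embeddings]
  refine ⟨fun ⟨⟨hinj, _, hzero⟩, hE⟩ => ⟨hinj, hE, hzero⟩, fun ⟨hinj, hE, hzero⟩ =>
    ⟨⟨hinj, fun E hEH => ?_, hzero⟩, hE⟩⟩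
  obtain ⟨i, hi, hplace⟩ := hE E hEH
  exact hplace.image_eq (hT.core_subset E hEH) ▸ hT.image_mem E hEH i hi

theorem injOn_of_places (hT : T.IsCompatible H F) (hE : E ∈ H) (hi : i ∈ T.items)
    {φ : α → ℕ} (hφ : T.Places E i φ) (hcore : Set.InjOn φ (T.core E)) : Set.InjOn φ E := by
  have hdisj : Disjoint (T.core E) (E \ T.core E) := disjoint_sdiff
  rw [← union_sdiff_of_subset (hT.core_subset E hE), coe_union,
    Set.injOn_union (disjoint_coe.2 hdisj)]
  refine ⟨hcore, (hT.label_injOn E hE i hi).congr fun v hv => (hφ.eq_label v hv).symm,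
    fun v hv w hw h => hT.label_notMem_body E hE i hi w hw ?_⟩
  rw [← hφ.eq_label w hw, ← h, ← hφ.image_core]
  exact mem_image_of_mem φ hv

theorem exists_extension (hT : T.IsCompatible H F) (hE : E ∈ H) (hi : i ∈ T.items)
    {V : Finset α} {ψ : α → ℕ} (hψ : Set.InjOn ψ V) (hcore : E ∩ V ⊆ T.core E)
    (hbody : (E ∩ V).image ψ ⊆ T.body i)
    (hfresh : ∀ w ∈ V.image ψ \ (E ∩ V).image ψ, w ∉ T.image E i) :
    ∃ φ : α → ℕ, T.Places E i φ ∧ Set.InjOn φ (E ∪ V : Finset α) ∧ (∀ v ∈ V, φ v = ψ v) ∧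
      ∀ v ∉ E ∪ V, φ v = 0 := by
  obtain ⟨g, hgψ, hginj, hgbody⟩ := exists_injOn_image_eq (hT.card_body E hE i hi).symm hcore
    (hψ.mono (coe_subset.2 inter_subset_right)) hbody
  let φ : α → ℕ := fun v => if v ∈ V then ψ v else if v ∈ T.core E then g v else
    if v ∈ E then T.label E i v else 0
  have hφV : ∀ v ∈ V, φ v = ψ v := fun v hv => if_pos hv
  have hφcore : Set.EqOn φ g (T.core E) := by
    intro v hv
    by_cases hvV : v ∈ V
    · exact (hφV v hvV).trans (hgψ (mem_inter.2 ⟨hT.core_subset E hE hv, hvV⟩)).symm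
    · simp only [φ, if_neg hvV, if_pos (mem_coe.1 hv)]
  have hplace : T.Places E i φ := by
    refine ⟨(image_congr hφcore).trans hgbody, fun v hv => ?_⟩
    obtain ⟨hvE, hvcore⟩ := Finset.mem_sdiff.1 hv
    have hvV : v ∉ V := fun h => hvcore (hcore (mem_inter.2 ⟨hvE, h⟩))
    simp only [φ, if_neg hvV, if_neg hvcore, if_pos hvE]
  refine ⟨φ, hplace, ?_, hφV, fun v hv => ?_⟩
  · rw [← union_sdiff_self_eq_union, coe_union, Set.injOn_union (disjoint_coe.2 disjoint_sdiff)]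
    refine ⟨hT.injOn_of_places hE hi hplace (hginj.congr hφcore.symm),
      (hψ.mono (coe_subset.2 sdiff_subset)).congr fun v hv => (hφV v (sdiff_subset hv)).symm,
      fun v hv w hw h => ?_⟩
    obtain ⟨hwV, hwE⟩ := Finset.mem_sdiff.1 hw
    refine hfresh (ψ w) (Finset.mem_sdiff.2 ⟨mem_image_of_mem ψ hwV, fun hmem => ?_⟩) ?_
    · obtain ⟨u, hu, huw⟩ := mem_image.1 hmem
      exact hwE (hψ (mem_inter.1 hu).2 hwV huw ▸ (mem_inter.1 hu).1)
    · rw [← hφV w hwV, ← h, ← hplace.image_eq (hT.core_subset E hE)]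
      exact mem_image_of_mem φ hv
  · simp only [mem_union, not_or] at hv
    simp only [φ, if_neg hv.2, if_neg fun h => hv.1 (hT.core_subset E hE h), if_neg hv.1]

theorem exists_placement_extension (hT : T.IsCompatible (insert E H) F) (hi : i ∈ T.items)
    {ψ : α → ℕ} (hψ : ψ ∈ T.placements H F) (hcore : E ∩ vertexSet H ⊆ T.core E)
    (hbody : (E ∩ vertexSet H).image ψ ⊆ T.body i)
    (hfresh : ∀ w ∈ (vertexSet H).image ψ \ (E ∩ vertexSet H).image ψ, w ∉ T.image E i) :
    ∃ φ ∈ T.placements (insert E H) F, (∀ v ∈ vertexSet H, φ v = ψ v) ∧ T.Places E i φ := by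
  have hE := mem_insert_self E H
  obtain ⟨hinj, hplaced, -⟩ := (hT.mono (subset_insert E H)).mem_placements.1 hψ
  obtain ⟨φ, hφ, hφinj, hφψ, hφ0⟩ := hT.exists_extension hE hi hinj hcore hbody hfresh
  rw [← vertexSet_insert] at hφinj hφ0
  refine ⟨φ, hT.mem_placements.2 ⟨hφinj, fun E' hE' => ?_, hφ0⟩, hφψ, hφ⟩
  rcases mem_insert.1 hE' with rfl | hE'H
  · exact ⟨i, hi, hφ⟩
  · obtain ⟨i', hi', hplace⟩ := hplaced E' hE'H
    exact ⟨i', hi', hplace.congr (hT.core_subset E' hE') fun v hv =>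
      hφψ v (subset_vertexSet hE'H hv)⟩

theorem eq_of_places (hT : T.IsCompatible H F) (hE : E ∈ H) {j : ι} (hi : i ∈ T.items)
    (hj : j ∈ T.items) {φ : α → ℕ} (hφi : T.Places E i φ) (hφj : T.Places E j φ) : i = j :=
  hT.item_ext E hE i hi j hj (hφi.image_core.symm.trans hφj.image_core) fun v hv =>
    (hφi.eq_label v hv).symm.trans (hφj.eq_label v hv)

theorem le_card_extensions (hT : T.IsCompatible (insert E H) F) {ℓ s : ℕ} {N L : ℝ}
    (hR : T.IsRich (insert E H) ℓ s N L) (hs : #(vertexSet H) ≤ s) {ψ : α → ℕ}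
    (hψ : ψ ∈ T.placements H F) (hcore : E ∩ vertexSet H ⊆ T.core E)
    (hcard : #(E ∩ vertexSet H) ≤ ℓ)
    (hbody : ∃ j ∈ T.items, (E ∩ vertexSet H).image ψ ⊆ T.body j) :
    L * N ^ #(E \ vertexSet H) ≤
      #{φ ∈ T.placements (insert E H) F | ∀ v ∈ vertexSet H, φ v = ψ v} := by
  obtain ⟨j, hj, hjA⟩ := hbody
  have hE := mem_insert_self E H
  have hinj := ((hT.mono (subset_insert E H)).mem_placements.1 hψ).1
  set A := (E ∩ vertexSet H).image ψ
  set V := vertexSet H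
  have hAcard : #A = #(E ∩ V) :=
    card_image_of_injOn (hinj.mono (coe_subset.2 inter_subset_right))
  set good : Finset ι := {i ∈ T.star A | ∀ w ∈ V.image ψ \ A, w ∉ T.image E i}
  have hgood : ∀ i ∈ good, i ∈ T.items ∧ A ⊆ T.body i ∧ ∀ w ∈ V.image ψ \ A, w ∉ T.image E i :=
    fun i hi => ⟨(mem_filter.1 (mem_filter.1 hi).1).1, (mem_filter.1 (mem_filter.1 hi).1).2,
      (mem_filter.1 hi).2⟩
  have hext : ∀ i ∈ good, ∃ φ ∈ T.placements (insert E H) F,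
      (∀ v ∈ V, φ v = ψ v) ∧ T.Places E i φ := fun i hi =>
    hT.exists_placement_extension (hgood i hi).1 hψ hcore (hgood i hi).2.1 (hgood i hi).2.2
  choose! φ hφ hφψ hφplace using hext
  have hle : #good ≤ #{φ ∈ T.placements (insert E H) F | ∀ v ∈ V, φ v = ψ v} :=
    card_le_card_of_injOn φ (fun i hi => mem_filter.2 ⟨hφ i hi, hφψ i hi⟩) fun i hi j hj h =>
      hT.eq_of_places hE (hgood i hi).1 (hgood j hj).1 (hφplace i hi) (h ▸ hφplace j hj)
  have hhalf : #(T.star A) ≤ 2 * #good :=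
    card_le_two_mul_card_filter_forall_not (((card_le_card sdiff_subset).trans card_image_le).trans
      hs) fun w hw => hR.card_bad_le E hE j hj A hjA (hAcard ▸ hcard) w (Finset.mem_sdiff.1 hw).2
  have hstar := hR.le_card_star E hE j hj A hjA (hAcard ▸ hcard)
  rw [hAcard, inter_comm, ← card_sdiff] at hstar
  have hstar_le : (#(T.star A) : ℝ) ≤ 2 * #{φ ∈ T.placements (insert E H) F | ∀ v ∈ V, φ v = ψ v} :=
    mod_cast hhalf.trans (Nat.mul_le_mul_left 2 hle)
  linarith

theorem pow_mul_pow_le_card_placements_insert (hT : T.IsCompatible (insert E H) F) {ℓ s : ℕ}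
    {N L : ℝ} (hR : T.IsRich (insert E H) ℓ s N L) (hL : 0 ≤ L) (hN : 0 ≤ N)
    (hs : #(vertexSet H) ≤ s) (hE : E ∉ H) (hcore : E ∩ vertexSet H ⊆ T.core E)
    (hcard : #(E ∩ vertexSet H) ≤ ℓ)
    (hbody : ∀ ψ ∈ T.placements H F, ∃ j ∈ T.items, (E ∩ vertexSet H).image ψ ⊆ T.body j)
    (hH : L ^ #H * N ^ #(vertexSet H) ≤ #(T.placements H F)) :
    L ^ #(insert E H) * N ^ #(vertexSet (insert E H)) ≤ #(T.placements (insert E H) F) := by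
  have hcount : #(T.placements H F) • (L * N ^ #(E \ vertexSet H)) ≤
      #(T.placements (insert E H) F) • (1 : ℝ) := by
    refine card_nsmul_le_card_nsmul (fun ψ φ => ∀ v ∈ vertexSet H, φ v = ψ v) ?_ ?_
    · exact fun ψ hψ => hT.le_card_extensions hR hs hψ hcore hcard (hbody ψ hψ)
    · refine fun φ _ => Nat.cast_le_one.2 (card_le_one.2 fun ψ hψ ψ' hψ' => funext fun v => ?_)
      rw [mem_bipartiteBelow] at hψ hψ'
      have hT' := hT.mono (subset_insert E H)
      by_cases hv : v ∈ vertexSet H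
      · rw [← hψ.2 v hv, hψ'.2 v hv]
      · rw [(hT'.mem_placements.1 hψ.1).2.2 v hv, (hT'.mem_placements.1 hψ'.1).2.2 v hv]
  rw [nsmul_eq_mul, nsmul_one] at hcount
  have hV : #(vertexSet (insert E H)) = #(vertexSet H) + #(E \ vertexSet H) := by
    rw [vertexSet_insert, union_comm, ← card_union_of_disjoint disjoint_sdiff,
      union_sdiff_self_eq_union]
  calc L ^ #(insert E H) * N ^ #(vertexSet (insert E H))
      = L ^ #H * N ^ #(vertexSet H) * (L * N ^ #(E \ vertexSet H)) := by
        rw [card_insert_of_notMem hE, hV]; ring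
    _ ≤ #(T.placements H F) * (L * N ^ #(E \ vertexSet H)) := by gcongr
    _ ≤ #(T.placements (insert E H) F) := hcount

theorem one_le_card_placements_empty : 1 ≤ #(T.placements ∅ F) := by
  refine one_le_card.2 ⟨0, mem_filter.2 ⟨mem_embeddings.2 ⟨?_, ?_, fun _ _ => rfl⟩, ?_⟩⟩ <;>
    simp [vertexSet]

theorem pow_mul_pow_le_card_placements (hH : IsHypertree H) (hT : T.IsCompatible H F) {ℓ s : ℕ}
    {N L : ℝ} (hR : T.IsRich H ℓ s N L) (hover : Overlapping ℓ H) (hL : 0 ≤ L) (hN : 0 ≤ N)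
    (hs : #(vertexSet H) ≤ s) : L ^ #H * N ^ #(vertexSet H) ≤ #(T.placements H F) := by
  induction hH with
  | single E =>
    rw [← insert_empty_eq] at hT hR ⊢
    have hempty : E ∩ vertexSet ∅ = ∅ := inter_empty E
    refine pow_mul_pow_le_card_placements_insert hT hR hL hN (Nat.zero_le s) (notMem_empty E)
      ?_ ?_ ?_ ?_
    · exact hempty ▸ empty_subset _
    · exact hempty ▸ Nat.zero_le ℓ
    · obtain ⟨j, hj⟩ := hR.nonempty
      exact fun ψ _ => ⟨j, hj, by rw [hempty, image_empty]; exact empty_subset _⟩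
    · simpa [vertexSet] using one_le_card_placements_empty
  | @grow H E E' _ hE hE' hint ih =>
    have hsub := subset_insert E H
    have hne : E ≠ E' := fun h => hE (h ▸ hE')
    have hEins := mem_insert_self E H
    have hE'ins := mem_insert_of_mem (b := E) hE'
    have hV : #(vertexSet H) ≤ s :=
      (card_le_card (vertexSet_insert H E ▸ subset_union_right)).trans hs
    have hIH := ih (hT.mono hsub) (hR.mono hsub)
      (fun D hD D' hD' => hover D (hsub hD) D' (hsub hD')) hV
    refine pow_mul_pow_le_card_placements_insert hT hR hL hN hV hE ?_ ?_ (fun ψ hψ => ?_) hIH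
    · exact hint ▸ hT.inter_subset_core E hEins E' hE'ins hne
    · exact hint ▸ hover E hEins E' hE'ins hne
    · obtain ⟨j, hj, hplace⟩ := ((hT.mono hsub).mem_placements.1 hψ).2.1 E' hE'
      refine ⟨j, hj, ?_⟩
      rw [hint, ← hplace.image_core, inter_comm]
      exact image_subset_image (hT.inter_subset_core E' hE'ins E hEins hne.symm)

end IsCompatible

end Template

end Greedy

section LargeDegrees

variable {α : Type} [DecidableEq α] {H : Finset (Finset α)} {G : Finset (Finset ℕ)} {k s n : ℕ}

namespace Template

theorem pow_mul_pow_le_card_embeddings {ι : Type} {T : Template α ι} {F : Finset (Finset ℕ)}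
    (hH : IsHypertree H) (hT : T.IsCompatible H F) {ℓ : ℕ} {N L : ℝ} (hR : T.IsRich H ℓ s N L)
    (hover : Overlapping ℓ H) (hL : 0 ≤ L) (hN : 0 ≤ N) (hs : #(vertexSet H) ≤ s) :
    L ^ #H * N ^ #(vertexSet H) ≤ #(embeddings H F) :=
  (hT.pow_mul_pow_le_card_placements hH hR hover hL hN hs).trans
    (mod_cast card_le_card (filter_subset _ _))

/-- The template mapping every edge bijectively to a member of `G`, without prescribed labels. -/
def ofFamily (α : Type) (G : Finset (Finset ℕ)) : Template α (Finset ℕ) where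
  items := G
  core := id
  body := id
  label _ _ _ := 0

theorem image_ofFamily (E : Finset α) (D : Finset ℕ) : (ofFamily α G).image E D = D := by
  simp [image, ofFamily]

theorem isCompatible_ofFamily (hH : ∀ E ∈ H, #E = k) (hG : ∀ D ∈ G, #D = k) :
    (ofFamily α G).IsCompatible H G where
  core_subset _ _ := Subset.rfl
  inter_subset_core _ _ _ _ _ := inter_subset_left
  card_body E hE D hD := (hG D hD).trans (hH E hE).symm
  label_notMem_body E _ _ _ v hv := by simp [ofFamily] at hv
  label_injOn E _ _ _ := by simp [ofFamily]
  image_mem E _ D hD := (image_ofFamily E D).symm ▸ hD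
  item_ext _ _ _ _ _ _ h _ := h

end Template

theorem div_two_mul_pow_mul_pow {K : Type*} [Field K] (d : K) {x : K}
    (hx : x ≠ 0) {t s : ℕ} (h : t ≤ s) : (d / (2 * x)) ^ t * x ^ s = (d / 2) ^ t * x ^ (s - t) := by
  obtain ⟨m, rfl⟩ := Nat.exists_eq_add_of_le h
  rw [Nat.add_sub_cancel_left, pow_add, ← mul_assoc, ← mul_pow, ← div_div, div_mul_cancel₀ _ hx]

theorem pow_mul_pow_le_card_embeddings (hH : IsKTree k H) {ℓ : ℕ} (hover : Overlapping ℓ H)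
    (hs : #(vertexSet H) ≤ s) (hG : ∀ D ∈ G, #D = k) (hne : G.Nonempty) {L N : ℝ} (hL : 0 ≤ L)
    (hN : 0 ≤ N)
    (hdeg : ∀ D ∈ G, ∀ A ⊆ D, #A ≤ ℓ → 2 * L * N ^ (k - #A) ≤ #{D' ∈ G | A ⊆ D'})
    (hbad : ∀ D ∈ G, ∀ A ⊆ D, #A ≤ ℓ → ∀ w ∉ A,
      2 * s * #{D' ∈ G | A ⊆ D' ∧ w ∈ D'} ≤ #{D' ∈ G | A ⊆ D'}) :
    L ^ #H * N ^ #(vertexSet H) ≤ #(embeddings H G) := by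
  refine Template.pow_mul_pow_le_card_embeddings hH.1
    (Template.isCompatible_ofFamily hH.2 hG) ⟨hne, fun E hE D hD A hA hAℓ => ?_,
      fun _ _ D hD A hA hAℓ w hw => ?_⟩ hover hL hN hs
  · rw [hH.2 E hE]
    exact hdeg D hD A hA hAℓ
  · simp only [Template.image_ofFamily]
    rw [Template.star, filter_filter]
    exact hbad D hD A hA hAℓ w hw

/-- `HasLargeDegrees k n d M G`: every set `A` of at most `k - 2` vertices of an edge of the
`k`-graph `G` lies in at least `d * n ^ (k - 1 - #A)` edges, and every set of `k - 1` vertices of an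
edge lies in at least `M` edges. -/
structure HasLargeDegrees (k n : ℕ) (d : ℝ) (M : ℕ) (G : Finset (Finset ℕ)) : Prop where
  le_card_superset : ∀ E ∈ G, ∀ A ⊆ E, #A + 2 ≤ k →
    d * (n : ℝ) ^ (k - 1 - #A) ≤ #{E' ∈ G | A ⊆ E'}
  le_card_superset_erase : ∀ E ∈ G, ∀ w ∈ E, M ≤ #{E' ∈ G | E.erase w ⊆ E'}

theorem HasLargeDegrees.pow_mul_pow_le_card_embeddings (hH : IsKTree k H) (h2 : TwoContractible H)
    (hn : 0 < n) (hG : ∀ E ∈ G, #E = k) (hne : G.Nonempty) {d : ℝ} (hd : 0 ≤ d)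
    (hdeg : HasLargeDegrees k n d (2 * #(vertexSet H) * k + 1) G) :
    (d / 2) ^ #H * (n : ℝ) ^ (#(vertexSet H) - #H) ≤ #(embeddings H G) := by
  have hn0 : (n : ℝ) ≠ 0 := by positivity
  have hk := h2.two_le hH.2 hH.1.nonempty
  rw [← div_two_mul_pow_mul_pow d hn0 h2.card_le_card_vertexSet]
  refine _root_.pow_mul_pow_le_card_embeddings hH (h2.overlapping hH.2) le_rfl hG hne
    (by positivity) (by positivity) (fun E hE A hA hAk => ?_) fun _ _ _ _ _ _ hw =>
      mul_card_superset_mem_le hG hdeg.le_card_superset_erase hw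
  refine le_trans (le_of_eq ?_) (hdeg.le_card_superset E hE A hA (by omega))
  rw [show k - #A = k - 1 - #A + 1 by omega, pow_succ]
  field_simp

end LargeDegrees

section Spread

variable {α : Type} [DecidableEq α] {H : Finset (Finset α)} {F T : Finset (Finset ℕ)} {k n : ℕ}
  {p q : Finset α → α} {u x : Finset ℕ → ℕ}

namespace Template

/-- The template mapping `p E` to `u D`, `q E` to `x D`, and the rest of the edge `E` to
`D \ {u D}`, where `D` ranges over `T`. -/
noncomputable def ofPairs (T : Finset (Finset ℕ)) (p q : Finset α → α) (u x : Finset ℕ → ℕ) :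
    Template α (Finset ℕ) where
  items := T
  core E := E \ {p E, q E}
  body D := D.erase (u D)
  label E D v := if v = p E then u D else x D

variable {E : Finset α} {D : Finset ℕ}

theorem sdiff_core_ofPairs (hp : p E ∈ E) (hq : q E ∈ E) :
    E \ (ofPairs T p q u x).core E = {p E, q E} :=
  Finset.sdiff_sdiff_eq_self (insert_subset hp (singleton_subset_iff.2 hq))

theorem image_ofPairs (hp : p E ∈ E) (hq : q E ∈ E) (hpq : p E ≠ q E) (hu : u D ∈ D) :
    (ofPairs T p q u x).image E D = insert (x D) D := by
  rw [image, sdiff_core_ofPairs hp hq, image_insert, image_singleton]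
  simp only [ofPairs, if_pos, if_neg hpq.symm]
  rw [union_insert, union_comm, ← insert_eq, insert_comm, insert_erase hu]

theorem isCompatible_ofPairs (hH : ∀ E ∈ H, #E = k) (hp : ∀ E ∈ H, p E ∈ E)
    (hq : ∀ E ∈ H, q E ∈ E) (hpq : ∀ E ∈ H, p E ≠ q E) (hp1 : ∀ E ∈ H, vdeg H (p E) = 1)
    (hq1 : ∀ E ∈ H, vdeg H (q E) = 1) (hT : ∀ D ∈ T, #D = k - 1) (hu : ∀ D ∈ T, u D ∈ D)
    (hx : ∀ D ∈ T, x D ∈ neighbors F D) : (ofPairs T p q u x).IsCompatible H F where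
  core_subset _ _ := sdiff_subset
  inter_subset_core E hE E' hE' hne v hv := by
    obtain ⟨hvE, hvE'⟩ := mem_inter.1 hv
    refine Finset.mem_sdiff.2 ⟨hvE, fun h => ?_⟩
    rcases mem_insert.1 h with rfl | h
    · exact hne (eq_of_vdeg_eq_one (hp1 E hE) hE' hvE' hE hvE)
    · rw [mem_singleton.1 h] at hvE hvE'
      exact hne (eq_of_vdeg_eq_one (hq1 E hE) hE' hvE' hE hvE)
  card_body E hE D hD := by
    simp only [ofPairs]
    rw [card_erase_of_mem (hu D hD), hT D hD, card_sdiff_of_subset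
      (insert_subset (hp E hE) (singleton_subset_iff.2 (hq E hE))), hH E hE, card_pair (hpq E hE)]
    omega
  label_notMem_body E _ D hD v _ := by
    simp only [ofPairs]
    split_ifs
    · exact notMem_erase _ _
    · exact fun h => (mem_neighbors.1 (hx D hD)).1 (mem_of_mem_erase h)
  label_injOn E hE D hD := by
    rw [sdiff_core_ofPairs (hp E hE) (hq E hE), coe_insert, coe_singleton, Set.injOn_pair]
    simp only [ofPairs, if_pos, if_neg (hpq E hE).symm]
    exact fun h => absurd (h ▸ hu D hD) (mem_neighbors.1 (hx D hD)).1
  image_mem E hE D hD := by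
    rw [image_ofPairs (hp E hE) (hq E hE) (hpq E hE) (hu D hD)]
    exact (mem_neighbors.1 (hx D hD)).2
  item_ext E hE D hD D' hD' hbody hlabel := by
    have hup := hlabel (p E) (sdiff_core_ofPairs (hp E hE) (hq E hE) ▸ mem_insert_self _ _)
    simp only [ofPairs, if_pos] at hup hbody
    rw [← insert_erase (hu D hD), ← insert_erase (hu D' hD'), hbody, hup]

end Template

theorem card_filter_superset_mem_insert_le (hT : ∀ D ∈ T, D ⊆ vtx n ∧ #D = k - 1)
    (hu : ∀ D ∈ T, u D ∈ D) {η : ℝ}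
    (hline : ∀ B y, (#{D ∈ T | D.erase (u D) = B ∧ x D = y} : ℝ) ≤ η * n) {A : Finset ℕ}
    {w : ℕ} (hw : w ∉ A) :
    (#{D ∈ {D ∈ T | A ⊆ D.erase (u D)} | w ∈ insert (x D) D} : ℝ) ≤
      (n : ℝ) ^ (k - 2 - #A) * (1 + η * n) := by
  set P : Finset (Finset ℕ) := {D ∈ T | A ⊆ D.erase (u D)}
  have hP : ∀ D ∈ P, D ∈ T ∧ A ⊆ D.erase (u D) := fun D hD => mem_filter.1 hD
  have hin : #{D ∈ P | w ∈ D} ≤ n ^ (k - 2 - #A) := by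
    refine (card_le_card fun D hD => ?_).trans
      (card_vtx n ▸ card_filter_superset_mem_le hT hw : #{D ∈ T | A ⊆ D ∧ w ∈ D} ≤ _)
    rw [mem_filter] at hD ⊢
    exact ⟨(hP D hD.1).1, (hP D hD.1).2.trans (erase_subset _ _), hD.2⟩
  have hbodies : #(P.image fun D => D.erase (u D)) ≤ n ^ (k - 2 - #A) := by
    rw [← card_vtx n]
    refine card_le_pow_of_forall_superset fun B hB => ?_
    obtain ⟨D, hD, rfl⟩ := mem_image.1 hB
    obtain ⟨hDT, hAD⟩ := hP D hD
    refine ⟨(erase_subset _ _).trans (hT D hDT).1, ?_, hAD⟩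
    rw [card_erase_of_mem (hu D hDT), (hT D hDT).2, Nat.sub_sub]
  have hout : (#{D ∈ P | x D = w} : ℝ) ≤ (n : ℝ) ^ (k - 2 - #A) * (η * n) := by
    have hmaps : ∀ D ∈ {D ∈ P | x D = w}, D.erase (u D) ∈ P.image fun D => D.erase (u D) :=
      fun D hD => mem_image_of_mem _ (mem_filter.1 hD).1
    rw [card_eq_sum_card_fiberwise hmaps, Nat.cast_sum]
    refine (sum_le_card_nsmul _ _ (η * n) fun B _ => ?_).trans ?_
    · refine le_trans (Nat.cast_le.2 (card_le_card fun D hD => ?_)) (hline B w)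
      simp only [mem_filter] at hD ⊢
      exact ⟨(hP D hD.1.1).1, hD.2, hD.1.2⟩
    · rw [nsmul_eq_mul]
      have := (Nat.cast_nonneg _).trans (hline ∅ 0)
      gcongr
      exact_mod_cast hbodies
  have hcover : {D ∈ P | w ∈ insert (x D) D} ⊆ {D ∈ P | w ∈ D} ∪ {D ∈ P | x D = w} := by
    intro D hD
    simp only [mem_filter, mem_union, mem_insert] at hD ⊢
    grind
  calc (#{D ∈ P | w ∈ insert (x D) D} : ℝ) ≤ #{D ∈ P | w ∈ D} + #{D ∈ P | x D = w} :=
        mod_cast (card_le_card hcover).trans (card_union_le _ _)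
    _ ≤ (n : ℝ) ^ (k - 2 - #A) + (n : ℝ) ^ (k - 2 - #A) * (η * n) :=
        add_le_add (mod_cast hin) hout
    _ = (n : ℝ) ^ (k - 2 - #A) * (1 + η * n) := by ring

theorem pow_mul_pow_le_card_embeddings_of_spread (hH : IsKTree k H) (h2 : TwoContractible H)
    (hn : 0 < n) (hT : ∀ D ∈ T, D ⊆ vtx n ∧ #D = k - 1) (hne : T.Nonempty)
    (hu : ∀ D ∈ T, u D ∈ D) (hx : ∀ D ∈ T, x D ∈ neighbors F D) {d η : ℝ} (hd : 0 ≤ d)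
    (hdeg : ∀ D ∈ T, ∀ A ⊆ D.erase (u D),
      d * (n : ℝ) ^ (k - 1 - #A) ≤ #{D' ∈ T | A ⊆ D'.erase (u D')})
    (hline : ∀ B y, (#{D ∈ T | D.erase (u D) = B ∧ x D = y} : ℝ) ≤ η * n)
    (hη : 4 * #(vertexSet H) * η ≤ d) (hdn : 4 * #(vertexSet H) ≤ d * n) :
    (d / 2) ^ #H * (n : ℝ) ^ (#(vertexSet H) - #H) ≤ #(embeddings H F) := by
  have hn0 : (n : ℝ) ≠ 0 := by positivity
  have hk := h2.two_le hH.2 hH.1.nonempty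
  obtain ⟨E₀, hE₀⟩ := hH.1.nonempty
  have : Nonempty α := ⟨(h2.exists_pair hE₀).choose⟩
  choose! p hp q hq hpq hp1 hq1 using fun E (hE : E ∈ H) => h2.exists_pair hE
  have hcompat : (Template.ofPairs T p q u x).IsCompatible H F :=
    Template.isCompatible_ofPairs hH.2 hp hq hpq hp1 hq1 (fun D hD => (hT D hD).2) hu hx
  rw [← div_two_mul_pow_mul_pow d hn0 h2.card_le_card_vertexSet]
  refine Template.pow_mul_pow_le_card_embeddings hH.1 hcompat
    ⟨hne, fun E hE D hD A hA hAk => ?_, fun E hE D hD A hA hAk w hw => ?_⟩ (h2.overlapping hH.2)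
    (by positivity) (by positivity) le_rfl
  · refine le_trans (le_of_eq ?_) (hdeg D hD A hA)
    rw [hH.2 E hE, show k - #A = k - 1 - #A + 1 by omega, pow_succ]
    field_simp
  · have himage : ∀ D' ∈ (Template.ofPairs T p q u x).star A,
        (Template.ofPairs T p q u x).image E D' = insert (x D') D' := fun D' hD' =>
      Template.image_ofPairs (hp E hE) (hq E hE) (hpq E hE) (hu D' (mem_filter.1 hD').1)
    rw [filter_congr fun D' hD' => by rw [himage D' hD']]
    have hcard := card_filter_superset_mem_insert_le hT hu hline hw
    have hstar := hdeg D hD A hA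
    rw [show k - 1 - #A = k - 2 - #A + 1 by omega, pow_succ] at hstar
    have hηn := mul_le_mul_of_nonneg_right hη n.cast_nonneg
    rw [← Nat.cast_le (α := ℝ)]
    push_cast
    calc (2 * #(vertexSet H) * #{D' ∈ {D' ∈ T | A ⊆ D'.erase (u D')} | w ∈ insert (x D') D'} : ℝ)
        ≤ 2 * #(vertexSet H) * ((n : ℝ) ^ (k - 2 - #A) * (1 + η * n)) := by gcongr
      _ = (n : ℝ) ^ (k - 2 - #A) * (2 * #(vertexSet H) + 2 * #(vertexSet H) * η * n) := by ring
      _ ≤ (n : ℝ) ^ (k - 2 - #A) * (d * n) := by gcongr; linarith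
      _ ≤ #{D' ∈ T | A ⊆ D'.erase (u D')} := by linarith

end Spread

section CommonNeighbors

variable {α : Type} [DecidableEq α] {H : Finset (Finset α)} {F T : Finset (Finset ℕ)}
  {S : Finset α} {Y : Finset ℕ} {k n : ℕ}

theorem injOn_piecewise {β γ : Type*} [DecidableEq β] {A B : Finset β} {f g : β → γ}
    (hf : Set.InjOn f (B ∩ A : Finset β)) (hg : Set.InjOn g (B \ A : Finset β))
    (hfg : ∀ v ∈ B ∩ A, ∀ w ∈ B \ A, f v ≠ g w) : Set.InjOn (A.piecewise f g) B := by
  rw [← sdiff_union_inter B A, coe_union, Set.injOn_union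
    (disjoint_coe.2 (disjoint_sdiff_inter B A))]
  refine ⟨hg.congr fun v hv => ?_, hf.congr fun v hv => ?_, fun v hv w hw => ?_⟩
  · exact (piecewise_eq_of_notMem _ _ _ (Finset.mem_sdiff.1 hv).2).symm
  · exact (piecewise_eq_of_mem _ _ _ (mem_inter.1 hv).2).symm
  · rw [piecewise_eq_of_notMem _ _ _ (Finset.mem_sdiff.1 hv).2,
      piecewise_eq_of_mem _ _ _ (mem_inter.1 hw).2]
    exact (hfg w hw v hv).symm

theorem IsCrosscut.piecewise_mem_embeddings (hS : IsCrosscut H S)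
    (hT : ∀ D ∈ T, Y ⊆ neighbors F D) {ι φ : α → ℕ}
    (hι : Set.InjOn ι S) (hιY : ∀ v ∈ S, ι v ∈ Y) (hφ : φ ∈ embeddings (H.image (· \ S)) T) :
    (vertexSet H ∩ S).piecewise ι φ ∈ embeddings H F := by
  obtain ⟨hinj, hE, hzero⟩ := mem_embeddings.1 hφ
  rw [vertexSet_image_sdiff] at hinj hzero
  have hnotMem : ∀ E ∈ H, ∀ w ∈ E \ S, φ w ∉ Y := fun E hEH w hw h =>
    (mem_neighbors.1 (hT _ (hE _ (mem_image_of_mem _ hEH)) h)).1 (mem_image_of_mem φ hw)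
  have hsdiff : vertexSet H \ (vertexSet H ∩ S) = vertexSet H \ S := sdiff_inter_self_left _ _
  refine mem_embeddings.2 ⟨injOn_piecewise ?_ (hsdiff ▸ hinj) fun v hv w hw h => ?_,
    fun E hEH => ?_, fun v hv => ?_⟩
  · exact hι.mono (coe_subset.2 (inter_subset_right.trans inter_subset_right))
  · rw [hsdiff, Finset.mem_sdiff] at hw
    obtain ⟨E, hEH, hwE⟩ := mem_vertexSet.1 hw.1
    have hvS : v ∈ S := (mem_inter.1 (mem_inter.1 hv).2).2
    exact hnotMem E hEH w (Finset.mem_sdiff.2 ⟨hwE, hw.2⟩) (h ▸ hιY v hvS)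
  · obtain ⟨y, hy⟩ := card_eq_one.1 (hS E hEH)
    have hyES := mem_inter.1 (hy ▸ mem_singleton_self y)
    have hyS : y ∈ vertexSet H ∩ S := mem_inter.2 ⟨subset_vertexSet hEH hyES.1, hyES.2⟩
    have hEy : E = insert y (E \ S) := by
      rw [insert_eq, ← hy, union_comm, sdiff_union_inter]
    have hrest : (E \ S).image ((vertexSet H ∩ S).piecewise ι φ) = (E \ S).image φ :=
      image_congr fun v hv => piecewise_eq_of_notMem _ _ _ fun h =>
        (Finset.mem_sdiff.1 hv).2 (mem_inter.1 h).2
    rw [hEy, image_insert, hrest, piecewise_eq_of_mem _ _ _ hyS]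
    exact (mem_neighbors.1 (hT _ (hE _ (mem_image_of_mem _ hEH)) (hιY y hyES.2))).2
  · rw [piecewise_eq_of_notMem _ _ _ fun h => hv (mem_inter.1 h).1]
    exact hzero v fun h => hv (Finset.mem_sdiff.1 h).1

theorem IsCrosscut.card_embeddings_image_sdiff_le (hS : IsCrosscut H S)
    (hT : ∀ D ∈ T, Y ⊆ neighbors F D) (hY : #S ≤ #Y) :
    #(embeddings (H.image (· \ S)) T) ≤ #(embeddings H F) := by
  obtain ⟨ι, hιY, hι⟩ := S.finite_toSet.exists_injOn_of_encard_le (t := (Y : Set ℕ))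
    (by simpa only [Set.encard_coe_eq_coe_finsetCard, Nat.cast_le] using hY)
  refine card_le_card_of_injOn (fun φ => (vertexSet H ∩ S).piecewise ι φ) (fun φ hφ =>
    hS.piecewise_mem_embeddings hT hι hιY hφ) fun φ hφ ψ hψ h => funext fun v => ?_
  by_cases hv : v ∈ vertexSet H ∩ S
  · have hzero : ∀ χ ∈ embeddings (H.image (· \ S)) T, χ v = 0 := fun χ hχ =>
      (mem_embeddings.1 hχ).2.2 v (by
        rw [vertexSet_image_sdiff]
        exact fun h => (Finset.mem_sdiff.1 h).2 (mem_inter.1 hv).2)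
    rw [hzero φ hφ, hzero ψ hψ]
  · simpa only [piecewise_eq_of_notMem _ _ _ hv] using congrFun h v

theorem Overlapping.image_sdiff {ℓ : ℕ} (hover : Overlapping ℓ H) (S : Finset α) :
    Overlapping ℓ (H.image (· \ S)) := fun E₁ hE₁ E₂ hE₂ hne => by
  obtain ⟨E, hE, rfl⟩ := mem_image.1 hE₁
  obtain ⟨E', hE', rfl⟩ := mem_image.1 hE₂
  exact (card_le_card (inter_subset_inter sdiff_subset sdiff_subset)).trans
    (hover E hE E' hE' fun h => hne (h ▸ rfl))

theorem IsCrosscut.isKTree_image_sdiff (hS : IsCrosscut H S) (hH : IsKTree k H)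
    (hinj : Set.InjOn (· \ S) (H : Set (Finset α))) :
    IsKTree (k - 1) (H.image (· \ S)) := by
  refine ⟨hH.1.image_sdiff hinj, fun E' hE' => ?_⟩
  obtain ⟨E, hE, rfl⟩ := mem_image.1 hE'
  rw [hS.card_sdiff hE, hH.2 E hE]

theorem pow_mul_pow_le_card_embeddings_of_common_neighbors (hH : IsKTree k H)
    (h2 : TwoContractible H) (hS : IsCrosscut H S) (hn : 0 < n)
    (hT : ∀ D ∈ T, D ⊆ vtx n ∧ #D = k - 1) (hne : T.Nonempty)
    (hTY : ∀ D ∈ T, Y ⊆ neighbors F D) (hY : #S ≤ #Y) {d : ℝ} (hd : 0 ≤ d)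
    (hdeg : ∀ D ∈ T, ∀ A ⊆ D, d * (n : ℝ) ^ (k - 1 - #A) ≤ #{D' ∈ T | A ⊆ D'})
    (hdn : 2 * #(vertexSet H) ≤ d * n) :
    (d / 2) ^ #H * (n : ℝ) ^ (#(vertexSet H) - #H) ≤ #(embeddings H F) := by
  have hinj := h2.injOn_sdiff hS
  have hk := h2.two_le hH.2 hH.1.nonempty
  have hV : #(vertexSet (H.image (· \ S))) ≤ #(vertexSet H) := by
    rw [vertexSet_image_sdiff]
    exact card_le_card sdiff_subset
  have hexp : #(vertexSet H) - #H ≤ #(vertexSet (H.image (· \ S))) := by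
    rw [vertexSet_image_sdiff, Finset.card_sdiff, inter_comm]
    exact Nat.sub_le_sub_left hS.card_vertexSet_inter_le _
  have hbound : (d / 2) ^ #(H.image (· \ S)) * (n : ℝ) ^ #(vertexSet (H.image (· \ S))) ≤
      #(embeddings (H.image (· \ S)) T) := by
    refine pow_mul_pow_le_card_embeddings (hS.isKTree_image_sdiff hH hinj)
      ((h2.overlapping hH.2).image_sdiff S) hV (fun D hD => (hT D hD).2) hne
      (by positivity) n.cast_nonneg (fun D hD A hA _ => ?_) fun D hD A hA hAk w hw => ?_
    · rw [mul_div_cancel₀ d two_ne_zero]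
      exact hdeg D hD A hA
    · have hbad := card_vtx n ▸ card_filter_superset_mem_le hT hw
      have hstar := hdeg D hD A hA
      rw [show k - 1 - #A = k - 2 - #A + 1 by omega, pow_succ] at hstar
      rw [← Nat.cast_le (α := ℝ)]
      push_cast
      calc (2 * #(vertexSet H) * #{D' ∈ T | A ⊆ D' ∧ w ∈ D'} : ℝ)
          ≤ d * n * (n : ℝ) ^ (k - 2 - #A) := by gcongr; exact_mod_cast hbad
        _ ≤ #{D' ∈ T | A ⊆ D'} := by linarith
  calc (d / 2) ^ #H * (n : ℝ) ^ (#(vertexSet H) - #H)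
      ≤ (d / 2) ^ #(H.image (· \ S)) * (n : ℝ) ^ #(vertexSet (H.image (· \ S))) := by
        rw [card_image_of_injOn hinj]
        have : (1 : ℝ) ≤ n := mod_cast hn
        gcongr
    _ ≤ #(embeddings (H.image (· \ S)) T) := hbound
    _ ≤ #(embeddings H F) := mod_cast hS.card_embeddings_image_sdiff_le hTY hY

end CommonNeighbors

section Pairs

variable {α : Type} [DecidableEq α]

/-- `BoundaryPair p q` says that `q` carries the same vertex as `p`, and that the set of `q` is
the set of `p` with one vertex removed. -/
def BoundaryPair (p q : Finset α × α) : Prop :=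
  ∃ u ∈ p.1, q = (p.1.erase u, p.2)

theorem card_image_snd_mul_pow_le {P : Finset (Finset α × α)} {r : ℕ} (hP : ∀ p ∈ P, #p.1 = r)
    {θ : ℝ} (hθ : 0 ≤ θ)
    (hdeg : ∀ p ∈ P, ∀ q, BoundaryPair p q → θ ≤ #{p' ∈ P | BoundaryPair p' q}) :
    (#(P.image Prod.snd) : ℝ) * θ ^ r ≤ (r : ℝ) ^ r * #P := by
  have hfibre : ∀ y ∈ P.image Prod.snd, θ ^ r ≤ (r : ℝ) ^ r * #{p ∈ P | p.2 = y} := by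
    intro y hy
    obtain ⟨⟨D, y⟩, hDP, rfl⟩ := mem_image.1 hy
    let G := {p ∈ P | p.2 = y}.image Prod.fst
    have mem_G : ∀ {E}, E ∈ G ↔ (E, y) ∈ P := by simp [G]
    have hG : θ ^ r ≤ (r : ℝ) ^ r * #{E ∈ G | ∅ ⊆ E} := by
      refine pow_le_mul_card_superset (fun E hE => hP _ (mem_G.1 hE)) hθ (fun E hE u hu => ?_)
        (mem_G.2 hDP) (empty_subset D) (by simp)
      refine (hdeg _ (mem_G.1 hE) (E.erase u, y) ⟨u, hu, rfl⟩).trans (Nat.cast_le.2 ?_)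
      refine (card_le_card (t := {E' ∈ G | E.erase u ⊆ E'}.image (·, y)) fun p hp => ?_).trans
        card_image_le
      obtain ⟨D', z⟩ := p
      obtain ⟨hpP, v, hv, hq⟩ := mem_filter.1 hp
      obtain ⟨hDv, rfl⟩ := Prod.mk.inj hq
      exact mem_image.2 ⟨D', mem_filter.2 ⟨mem_G.2 hpP, hDv ▸ erase_subset v D'⟩, rfl⟩
    refine hG.trans ?_
    gcongr
    exact (card_filter_le _ _).trans card_image_le
  calc (#(P.image Prod.snd) : ℝ) * θ ^ r
      ≤ ∑ y ∈ P.image Prod.snd, (r : ℝ) ^ r * #{p ∈ P | p.2 = y} := by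
        rw [← nsmul_eq_mul]
        exact card_nsmul_le_sum _ _ _ hfibre
    _ = (r : ℝ) ^ r * #P := by
        rw [← mul_sum, card_eq_sum_card_image Prod.snd P, Nat.cast_sum]

/-- Peel the pairs `(D, y)` with `y ∈ A D`: `T'` consists of the `D` that lose a pair, and the
vertices of the remaining pairs are so rich that there are few of them. -/
theorem exists_spread_subfamily [Nonempty α] {T : Finset (Finset α)}
    {A : Finset α → Finset α} {r σ : ℕ} (hT : ∀ D ∈ T, #D = r ∧ #(A D) ≤ σ) {θ : ℝ}
    (hθ : 0 ≤ θ) :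
    ∃ T' ⊆ T, ∃ u x : Finset α → α, (∀ D ∈ T', u D ∈ D ∧ x D ∈ A D) ∧
      (∀ B y, (#{D ∈ T' | D.erase (u D) = B ∧ x D = y} : ℝ) ≤ θ) ∧
      ∃ X, (#X : ℝ) * θ ^ r ≤ (r : ℝ) ^ r * (#T * σ) ∧ ∀ D ∈ T \ T', A D ⊆ X := by
  let P : Finset (Finset α × α) := T.biUnion fun D => (A D).image (D, ·)
  have mem_P : ∀ {D y}, (D, y) ∈ P ↔ D ∈ T ∧ y ∈ A D := by simp [P]
  have hPcard : #P ≤ #T * σ :=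
    card_biUnion_le_card_mul _ _ _ fun D hD => card_image_le.trans (hT D hD).2
  obtain ⟨P', hP', c, hdeg, hc, hfibre⟩ :=
    exists_peeling BoundaryPair (θ := fun _ => θ) (fun _ => hθ) P
  have hlabel : ∀ D ∈ {D ∈ T | ¬ ∀ y ∈ A D, (D, y) ∈ P'}, ∃ u x, u ∈ D ∧ x ∈ A D ∧
      (D, x) ∈ P \ P' ∧ c (D, x) = (D.erase u, x) := by
    intro D hD
    simp only [mem_filter, not_forall] at hD
    obtain ⟨hDT, x, hx, hxP'⟩ := hD
    have hmem : (D, x) ∈ P \ P' := Finset.mem_sdiff.2 ⟨mem_P.2 ⟨hDT, hx⟩, hxP'⟩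
    obtain ⟨u, hu, hcu⟩ := hc _ hmem
    exact ⟨u, x, hu, hx, hmem, hcu⟩
  choose! u x hu hx hmem hcu using hlabel
  refine ⟨_, filter_subset _ _, u, x, fun D hD => ⟨hu D hD, hx D hD⟩, fun B y => ?_,
    P'.image Prod.snd, ?_, fun D hD y hy => ?_⟩
  · refine le_trans (Nat.cast_le.2 ?_) (hfibre (B, y))
    refine card_le_card_of_injOn (fun D => (D, x D)) (fun D hD => ?_)
      fun D _ D' _ h => congrArg Prod.fst h
    obtain ⟨hDT, hB, hy⟩ := mem_filter.1 hD
    exact mem_coe.2 (mem_filter.2 ⟨hmem D hDT, by rw [hcu D hDT, hB, hy]⟩)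
  · refine (card_image_snd_mul_pow_le (r := r) (fun p hp => ?_) hθ hdeg).trans ?_
    · exact (hT p.1 (mem_P.1 (hP' hp)).1).1
    · gcongr
      exact_mod_cast (card_le_card hP').trans hPcard
  · rw [Finset.mem_sdiff, mem_filter, not_and, not_not] at hD
    exact mem_image.2 ⟨(D, y), hD.2 hD.1 y hy, rfl⟩

theorem exists_card_le_pow_mul_card_filter_eq {ι β : Type*} [DecidableEq β] {T : Finset ι}
    {A : ι → Finset β} {X : Finset β} {σ : ℕ} (hT : T.Nonempty)
    (hA : ∀ i ∈ T, A i ⊆ X ∧ #(A i) = σ) :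
    ∃ Y, #Y = σ ∧ #T ≤ #X ^ σ * #{i ∈ T | A i = Y} := by
  have hmaps : ∀ i ∈ T, A i ∈ X.powersetCard σ := fun i hi => mem_powersetCard.2 (hA i hi)
  obtain ⟨i, hi⟩ := hT
  obtain ⟨Y, hY, hmax⟩ := exists_max_image (X.powersetCard σ) (fun Y => #{i ∈ T | A i = Y})
    ⟨A i, hmaps i hi⟩
  refine ⟨Y, (mem_powersetCard.1 hY).2, ?_⟩
  calc #T ≤ #{i ∈ T | A i = Y} * #(X.powersetCard σ) :=
        card_le_mul_card_image_of_maps_to hmaps _ hmax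
    _ ≤ #X ^ σ * #{i ∈ T | A i = Y} := by
        rw [card_powersetCard, mul_comm]
        exact Nat.mul_le_mul_right _ (Nat.choose_le_pow _ _)

theorem exists_spread_or_constant_subfamily [Nonempty α] {T : Finset (Finset α)} {V : Finset α}
    {A : Finset α → Finset α} {r σ : ℕ} (hT : ∀ D ∈ T, D ⊆ V ∧ #D = r ∧ #(A D) = σ)
    (hV : V.Nonempty) {η : ℝ} (hη : 0 < η) :
    (∃ T' ⊆ T, (#T : ℝ) ≤ 2 * #T' ∧ ∃ u x : Finset α → α, (∀ D ∈ T', u D ∈ D ∧ x D ∈ A D) ∧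
      ∀ B y, (#{D ∈ T' | D.erase (u D) = B ∧ x D = y} : ℝ) ≤ η * #V) ∨
    ∃ T' ⊆ T, (#T : ℝ) ≤ 2 * ((σ * (r / η) ^ r) ^ σ * #T') ∧
      ∃ Y, #Y = σ ∧ ∀ D ∈ T', A D = Y := by
  obtain ⟨T', hT', u, x, hux, hline, X, hX, hAX⟩ := exists_spread_subfamily
    (fun D hD => ⟨(hT D hD).2.1, (hT D hD).2.2.le⟩) (θ := η * #V) (by positivity)
  rcases le_or_gt #T (2 * #T') with hhalf | hhalf
  · exact .inl ⟨T', hT', mod_cast hhalf, u, x, hux, hline⟩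
  have hsplit : #(T \ T') + #T' = #T := card_sdiff_add_card_eq_card hT'
  have : (0 : ℝ) < #V := mod_cast hV.card_pos
  have hTV : (#T : ℝ) ≤ (#V : ℝ) ^ r := by
    exact_mod_cast card_le_pow_of_forall_superset fun D hD =>
      ⟨(hT D hD).1, (hT D hD).2.1, empty_subset D⟩
  have hXcard : (#X : ℝ) ≤ σ * (r / η) ^ r := by
    refine le_of_mul_le_mul_right ?_ (show 0 < (η * #V) ^ r by positivity)
    calc (#X : ℝ) * (η * #V) ^ r ≤ (r : ℝ) ^ r * (#T * σ) := hX
      _ ≤ (r : ℝ) ^ r * ((#V : ℝ) ^ r * σ) := by gcongr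
      _ = σ * (r / η) ^ r * (η * #V) ^ r := by
        rw [div_pow, mul_pow]
        field_simp
  obtain ⟨Y, hY, hcard⟩ := exists_card_le_pow_mul_card_filter_eq (T := T \ T') (A := A) (X := X)
    (card_pos.1 (by omega)) fun D hD => ⟨hAX D hD, (hT D (Finset.mem_sdiff.1 hD).1).2.2⟩
  refine .inr ⟨{D ∈ T \ T' | A D = Y}, (filter_subset _ _).trans sdiff_subset, ?_, Y, hY,
    fun D hD => (mem_filter.1 hD).2⟩
  calc (#T : ℝ) ≤ 2 * #(T \ T') := by exact_mod_cast (show #T ≤ 2 * #(T \ T') by omega)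
    _ ≤ 2 * ((#X : ℝ) ^ σ * #{D ∈ T \ T' | A D = Y}) := by gcongr; exact_mod_cast hcard
    _ ≤ 2 * ((σ * (r / η) ^ r) ^ σ * #{D ∈ T \ T' | A D = Y}) := by gcongr

end Pairs

section ManyNeighbors

variable {α : Type} [DecidableEq α] {H : Finset (Finset α)} {S : Finset α} {k n : ℕ}
  {F T : Finset (Finset ℕ)}

theorem pow_mul_pow_le_card_embeddings_of_card_gt_of_spread (hH : IsKTree k H)
    (h2 : TwoContractible H) (hn : 0 < n) (hT : ∀ D ∈ T, D ⊆ vtx n ∧ #D = k - 1)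
    {u x : Finset ℕ → ℕ} (hux : ∀ D ∈ T, u D ∈ D ∧ x D ∈ neighbors F D) {d η : ℝ} (hd : 0 ≤ d)
    (hline : ∀ B y, (#{D ∈ T | D.erase (u D) = B ∧ x D = y} : ℝ) ≤ η * n)
    (hη : 4 * #(vertexSet H) * η ≤ d) (hdn : 4 * #(vertexSet H) ≤ d * n)
    (hlarge : k * (d * (n : ℝ) ^ (k - 1)) < #T) :
    (d / 2) ^ #H * (n : ℝ) ^ (#(vertexSet H) - #H) ≤ #(embeddings H F) := by
  have hk : ((k - 1 : ℕ) : ℝ) + 1 = k := by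
    exact_mod_cast Nat.sub_add_cancel (one_le_two.trans (h2.two_le hH.2 hH.1.nonempty))
  obtain ⟨T', hT', hne, hdeg⟩ := exists_subfamily_forall_le_card_superset (Q := T)
    (B := fun D => D.erase (u D)) (X := vtx n) (r := k - 1) hd
    (fun D hD => ⟨(erase_subset _ _).trans (hT D hD).1,
      (card_erase_le).trans (hT D hD).2.le⟩) (by rwa [card_vtx, hk])
  rw [card_vtx] at hdeg
  refine pow_mul_pow_le_card_embeddings_of_spread hH h2 hn (fun D hD => hT D (hT' hD)) hne
    (fun D hD => (hux D (hT' hD)).1) (fun D hD => (hux D (hT' hD)).2) hd hdeg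
    (fun B y => ?_) hη hdn
  refine le_trans (Nat.cast_le.2 (card_le_card ?_)) (hline B y)
  exact filter_subset_filter _ hT'

theorem pow_mul_pow_le_card_embeddings_of_card_gt_of_common_neighbors (hH : IsKTree k H)
    (h2 : TwoContractible H) (hS : IsCrosscut H S) (hn : 0 < n)
    (hT : ∀ D ∈ T, D ⊆ vtx n ∧ #D = k - 1) {Y : Finset ℕ} (hTY : ∀ D ∈ T, Y ⊆ neighbors F D)
    (hY : #S ≤ #Y) {d : ℝ} (hd : 0 ≤ d) (hdn : 2 * #(vertexSet H) ≤ d * n)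
    (hlarge : k * (d * (n : ℝ) ^ (k - 1)) < #T) :
    (d / 2) ^ #H * (n : ℝ) ^ (#(vertexSet H) - #H) ≤ #(embeddings H F) := by
  have hk : ((k - 1 : ℕ) : ℝ) + 1 = k := by
    exact_mod_cast Nat.sub_add_cancel (one_le_two.trans (h2.two_le hH.2 hH.1.nonempty))
  obtain ⟨T', hT', hne, hdeg⟩ := exists_subfamily_forall_le_card_superset (Q := T)
    (B := id) (X := vtx n) (r := k - 1) hd
    (fun D hD => ⟨(hT D hD).1, (hT D hD).2.le⟩) (by rwa [card_vtx, hk])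
  rw [card_vtx] at hdeg
  exact pow_mul_pow_le_card_embeddings_of_common_neighbors hH h2 hS hn
    (fun D hD => hT D (hT' hD)) hne (fun D hD => hTY D (hT' hD)) hY hd hdeg hdn

theorem pow_mul_pow_le_card_embeddings_of_many_neighbors (hH : IsKTree k H)
    (h2 : TwoContractible H) (hS : IsCrosscut H S) (hn : 0 < n)
    (hT : ∀ D ∈ T, D ⊆ vtx n ∧ #D = k - 1 ∧ #S ≤ #(neighbors F D)) {d d' η : ℝ}
    (hη : 0 < η) (hηd : 4 * #(vertexSet H) * η ≤ d) (hd' : 0 ≤ d') (hdd' : d' ≤ d)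
    (hdn : 4 * #(vertexSet H) ≤ d' * n) (hlarge : 2 * (k * (d * (n : ℝ) ^ (k - 1))) < #T)
    (hlarge' : 2 * ((#S * ((k - 1 : ℕ) / η) ^ (k - 1)) ^ #S *
      (k * (d' * (n : ℝ) ^ (k - 1)))) < #T) :
    (d' / 2) ^ #H * (n : ℝ) ^ (#(vertexSet H) - #H) ≤ #(embeddings H F) := by
  choose! A hAN hAS using fun D hD => exists_subset_card_eq (hT D hD).2.2
  rcases exists_spread_or_constant_subfamily (fun D hD => ⟨(hT D hD).1, (hT D hD).2.1, hAS D hD⟩)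
    (card_pos.1 (by rwa [card_vtx])) hη with
    ⟨T', hT', hcard, u, x, hux, hline⟩ | ⟨T', hT', hcard, Y, hY, hAY⟩
  · rw [card_vtx] at hline
    refine le_trans (by gcongr) (pow_mul_pow_le_card_embeddings_of_card_gt_of_spread hH h2 hn
      (fun D hD => ⟨(hT D (hT' hD)).1, (hT D (hT' hD)).2.1⟩)
      (fun D hD => ⟨(hux D hD).1, hAN D (hT' hD) (hux D hD).2⟩) (hd'.trans hdd') hline hηd
      (hdn.trans (by gcongr)) (by linarith))
  · refine pow_mul_pow_le_card_embeddings_of_card_gt_of_common_neighbors hH h2 hS hn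
      (fun D hD => ⟨(hT D (hT' hD)).1, (hT D (hT' hD)).2.1⟩)
      (fun D hD => hAY D hD ▸ hAN D (hT' hD)) hY.ge hd' (le_trans (by gcongr; norm_num) hdn) ?_
    refine lt_of_mul_lt_mul_left (a := 2 * (#S * ((k - 1 : ℕ) / η) ^ (k - 1) : ℝ) ^ #S) ?_
      (by positivity)
    linarith

theorem exists_forall_mul_pow_le_card_embeddings (hH : IsKTree k H) (h2 : TwoContractible H)
    (hS : IsCrosscut H S) {δ : ℝ} (hδ : 0 < δ) :
    ∃ c : ℝ, 0 < c ∧ ∃ n₁ : ℕ, ∀ n ≥ n₁, ∀ F T : Finset (Finset ℕ),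
      (∀ D ∈ T, D ⊆ vtx n ∧ #D = k - 1 ∧ #S ≤ #(neighbors F D)) →
      δ * (n : ℝ) ^ (k - 1) ≤ #T →
      c * (n : ℝ) ^ (#(vertexSet H) - #H) ≤ #(embeddings H F) := by
  have hk : (0 : ℝ) < k := mod_cast zero_lt_two.trans_le (h2.two_le hH.2 hH.1.nonempty)
  obtain ⟨d, hd, hdδ⟩ : ∃ d : ℝ, 0 < d ∧ 2 * (k * d) = δ / 2 :=
    ⟨δ / (4 * k), by positivity, by field_simp; norm_num⟩
  obtain ⟨η, hη, hηd⟩ : ∃ η : ℝ, 0 < η ∧ 4 * #(vertexSet H) * η ≤ d := by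
    refine ⟨d / (4 * (#(vertexSet H) + 1)), by positivity, ?_⟩
    rw [← mul_div_assoc, div_le_iff₀ (by positivity)]
    nlinarith
  obtain ⟨K, hK, hKdef⟩ : ∃ K : ℝ, 0 ≤ K ∧ K = (#S * ((k - 1 : ℕ) / η) ^ (k - 1)) ^ #S :=
    ⟨_, by positivity, rfl⟩
  obtain ⟨d', hd', hdd', hd'δ⟩ : ∃ d' : ℝ, 0 < d' ∧ d' ≤ d ∧ 2 * (K * (k * d')) < δ := by
    refine ⟨d / (K + 1), by positivity, div_le_self hd.le (by linarith), ?_⟩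
    have : K / (K + 1) ≤ 1 := (div_le_one (by positivity)).2 (by linarith)
    calc 2 * (K * (k * (d / (K + 1)))) = K / (K + 1) * (2 * (k * d)) := by ring
      _ < δ := by rw [hdδ]; nlinarith
  refine ⟨(d' / 2) ^ #H, by positivity, ⌈(4 * #(vertexSet H) : ℝ) / d'⌉₊ + 1,
    fun n hn F T hT hTcard => ?_⟩
  have hn0 : 0 < n := by omega
  have hpow : (0 : ℝ) < (n : ℝ) ^ (k - 1) := by positivity
  refine pow_mul_pow_le_card_embeddings_of_many_neighbors hH h2 hS hn0 hT hη hηd hd'.le hdd'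
    ?_ ?_ (hKdef ▸ ?_)
  · rw [← div_le_iff₀' hd']
    exact (Nat.le_ceil _).trans (Nat.cast_le.2 (by omega))
  · nlinarith
  · nlinarith

end ManyNeighbors

section Threshold

variable {r n : ℕ} {F Q : Finset (Finset ℕ)}

theorem card_le_mul_choose_add_mul_card (hF : IsKGraphOn (r + 1) n F) (hQ : Q ⊆ F)
    {c : Finset ℕ → Finset ℕ} (hc : ∀ E ∈ Q, c E ⊆ E ∧ #(c E) = r) {M : ℕ}
    (hfibre : ∀ D, #D = r → #{E ∈ Q | c E = D} ≤ M) (τ : ℕ) :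
    #Q ≤ τ * n.choose r + M * #{D ∈ (vtx n).powersetCard r | τ < #(neighbors F D)} := by
  have hmaps : ∀ E ∈ Q, c E ∈ (vtx n).powersetCard r := fun E hE =>
    mem_powersetCard.2 ⟨(hc E hE).1.trans (hF E (hQ hE)).1, (hc E hE).2⟩
  have hbound : ∀ D ∈ (vtx n).powersetCard r,
      #{E ∈ Q | c E = D} ≤ τ + M * if τ < #(neighbors F D) then 1 else 0 := by
    intro D hD
    have hDr := (mem_powersetCard.1 hD).2
    split_ifs with hτ
    · exact le_add_left ((hfibre D hDr).trans_eq (mul_one M).symm)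
    rw [mul_zero, add_zero]
    refine le_trans ?_ (not_lt.1 hτ)
    rw [← card_filter_superset_eq_card_neighbors fun E hE => by rw [(hF E hE).2, hDr]]
    refine card_le_card fun E hE => ?_
    obtain ⟨hEQ, rfl⟩ := mem_filter.1 hE
    exact mem_filter.2 ⟨hQ hEQ, (hc E hEQ).1⟩
  calc #Q = ∑ D ∈ (vtx n).powersetCard r, #{E ∈ Q | c E = D} := card_eq_sum_card_fiberwise hmaps
    _ ≤ ∑ D ∈ (vtx n).powersetCard r, (τ + M * if τ < #(neighbors F D) then 1 else 0) :=
      sum_le_sum hbound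
    _ = _ := by
      rw [sum_add_distrib, sum_const, smul_eq_mul, card_powersetCard, card_vtx, mul_comm,
        ← mul_sum, card_filter]

theorem exists_hasLargeDegrees_or_card_le (hF : IsKGraphOn (r + 1) n F) {d : ℝ} (hd : 0 ≤ d)
    (M τ : ℕ) :
    (∃ G ⊆ F, G.Nonempty ∧ HasLargeDegrees (r + 1) n d M G) ∨
    (#F : ℝ) ≤ r * (d * (n : ℝ) ^ r) +
      (τ * n.choose r + M * #{D ∈ (vtx n).powersetCard r | τ < #(neighbors F D)}) := by
  let θ : Finset ℕ → ℝ := fun A => if #A < r then d * (n : ℝ) ^ (r - #A) else M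
  obtain ⟨G, hG, c, hdeg, hc, hfibre⟩ := exists_peeling (fun E A => A ⊆ E ∧ #A ≤ r) (θ := θ)
    (fun A => by dsimp only [θ]; split_ifs <;> positivity) F
  have hdeg' : ∀ E ∈ G, ∀ A ⊆ E, #A ≤ r → θ A ≤ #{E' ∈ G | A ⊆ E'} := fun E hE A hA hAr => by
    simpa only [hAr, and_true] using hdeg E hE A ⟨hA, hAr⟩
  rcases G.eq_empty_or_nonempty with rfl | hne
  swap
  · refine .inl ⟨G, hG, hne, fun E hE A hA hAr => ?_, fun E hE w hw => ?_⟩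
    · replace hAr : #A < r := by omega
      simpa only [θ, if_pos hAr, Nat.add_sub_cancel] using hdeg' E hE A hA hAr.le
    · have hcard : #(E.erase w) = r := by rw [card_erase_of_mem hw, (hF E (hG hE)).2]; rfl
      simpa only [θ, hcard, lt_irrefl, if_false, Nat.cast_le] using
        hdeg' E hE _ (erase_subset w E) hcard.le
  right
  rw [sdiff_empty] at hc hfibre
  have hsmall : (#{E ∈ F | #(c E) < r} : ℝ) ≤ r * (d * (n : ℝ) ^ r) := by
    have h := card_le_mul_pow_of_card_label_lt (Q := {E ∈ F | #(c E) < r}) (c := c) (X := vtx n)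
      (d := d) (r := r) r.le_succ (fun E hE => ?_) (fun A hA => ?_) hd
    · rwa [card_vtx] at h
    · obtain ⟨hEF, hEr⟩ := mem_filter.1 hE
      exact ⟨(hc E hEF).1.trans (hF E hEF).1, hEr⟩
    · refine (Nat.cast_le.2 (card_le_card (filter_subset_filter _ (filter_subset _ _)))).trans
        ((hfibre A).trans ?_)
      rw [card_vtx]
      exact (if_pos hA).le
  have hlarge : #{E ∈ F | ¬ #(c E) < r} ≤ τ * n.choose r +
      M * #{D ∈ (vtx n).powersetCard r | τ < #(neighbors F D)} := by
    refine card_le_mul_choose_add_mul_card hF (filter_subset _ _) (c := c) (fun E hE => ?_)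
      (fun D hD => ?_) τ
    · obtain ⟨hEF, hEr⟩ := mem_filter.1 hE
      exact ⟨(hc E hEF).1, (hc E hEF).2.antisymm (not_lt.1 hEr)⟩
    · refine (card_le_card (filter_subset_filter _ (filter_subset _ _))).trans ?_
      simpa only [θ, hD, lt_irrefl, if_false, Nat.cast_le] using hfibre D
  rw [← card_filter_add_card_filter_not (s := F) (fun E => #(c E) < r), Nat.cast_add]
  exact add_le_add hsmall (mod_cast hlarge)

theorem pow_le_mul_choose (h : 2 * r ≤ n) :
    (n : ℝ) ^ r ≤ 2 ^ r * (r.factorial : ℝ) * n.choose r := by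
  have hpow := Nat.pow_le_choose r n (α := ℝ)
  rw [div_le_iff₀ (by positivity)] at hpow
  have hn : (n : ℝ) ≤ 2 * ((n + 1 - r : ℕ) : ℝ) := by
    exact_mod_cast (show n ≤ 2 * (n + 1 - r) by omega)
  calc (n : ℝ) ^ r ≤ (2 * ((n + 1 - r : ℕ) : ℝ)) ^ r := by gcongr
    _ = 2 ^ r * ((n + 1 - r : ℕ) : ℝ) ^ r := mul_pow _ _ _
    _ ≤ 2 ^ r * (n.choose r * (r.factorial : ℝ)) := by gcongr
    _ = 2 ^ r * (r.factorial : ℝ) * n.choose r := by ring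

theorem card_ge_of_threshold {N M T σ a ε γ : ℝ} (hN : 0 < N) (hTN : T ≤ N) (hM : 0 ≤ M)
    (hσ : 1 ≤ σ) (hγ : 0 < γ) (hε0 : 0 < ε) (hε : ε * (σ + γ) = γ / 2) (ha : σ - 1 + γ ≤ a)
    (h : a * N ≤ ε * a * N + ((σ - 1) * N + M * T)) :
    a ≤ 2 * (σ + M) ∧ γ / 2 * N ≤ M * T := by
  have hε2 : ε ≤ 1 / 2 := by nlinarith
  constructor
  · have hupper : (1 - ε) * a ≤ σ - 1 + M := by
      refine le_of_mul_le_mul_right ?_ hN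
      nlinarith
    nlinarith
  · have hlower : σ - 1 + γ / 2 ≤ (1 - ε) * a := by nlinarith
    nlinarith

theorem exists_forall_hasLargeDegrees_or_many_neighbors (r M : ℕ) {σ : ℕ} (hσ : 0 < σ) {γ : ℝ}
    (hγ : 0 < γ) :
    ∃ d : ℝ, 0 < d ∧ ∃ δ : ℝ, 0 < δ ∧ ∃ L : ℝ, ∀ n ≥ 2 * r, ∀ (F : Finset (Finset ℕ)) (a : ℝ),
      IsKGraphOn (r + 1) n F → (#F : ℝ) = a * n.choose r → (σ : ℝ) - 1 + γ ≤ a →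
      (∃ G ⊆ F, G.Nonempty ∧ HasLargeDegrees (r + 1) n (d * a) M G) ∨
      a ≤ L ∧ δ * (n : ℝ) ^ r ≤ #{D ∈ (vtx n).powersetCard r | σ ≤ #(neighbors F D)} := by
  obtain ⟨K, hK, hpow⟩ : ∃ K : ℝ, 0 < K ∧ ∀ n ≥ 2 * r, (n : ℝ) ^ r ≤ K * n.choose r :=
    ⟨_, by positivity, fun n hn => pow_le_mul_choose hn⟩
  have hσ' : (1 : ℝ) ≤ σ := mod_cast hσ
  obtain ⟨ε, hε0, hε⟩ : ∃ ε : ℝ, 0 < ε ∧ ε * (σ + γ) = γ / 2 :=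
    ⟨γ / 2 / (σ + γ), by positivity, by field_simp⟩
  refine ⟨ε / ((r + 1) * K), by positivity, γ / (2 * ((M + 1) * K)), by positivity, 2 * (σ + M),
    fun n hn F a hF hFa ha => ?_⟩
  have ha0 : 0 < a := by linarith
  refine (exists_hasLargeDegrees_or_card_le hF (d := ε / ((r + 1) * K) * a) (by positivity) M
    (σ - 1)).imp_right fun hcard => ?_
  have hN : (0 : ℝ) < n.choose r := mod_cast Nat.choose_pos (by omega)
  have hlow : r * (ε / ((r + 1) * K) * a * (n : ℝ) ^ r) ≤ ε * a * n.choose r := by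
    calc r * (ε / ((r + 1) * K) * a * (n : ℝ) ^ r)
        ≤ (r + 1) * (ε / ((r + 1) * K) * a * (K * n.choose r)) := by
          gcongr
          · linarith
          · exact hpow n hn
      _ = ε * a * n.choose r := by field_simp
  simp only [Order.sub_one_lt_iff_of_not_isMin (mt isMin_iff_eq_bot.1 hσ.ne'),
    Nat.cast_pred hσ] at hcard
  set T := {D ∈ (vtx n).powersetCard r | σ ≤ #(neighbors F D)}
  have hTN : (#T : ℝ) ≤ n.choose r := by
    rw [← card_vtx n, ← card_powersetCard, Nat.cast_le]
    exact card_filter_le _ _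
  obtain ⟨haL, hT⟩ := card_ge_of_threshold hN hTN M.cast_nonneg hσ' hγ hε0 hε ha
    (hFa ▸ hcard.trans (by gcongr))
  refine ⟨haL, le_of_mul_le_mul_left ?_ (show (0 : ℝ) < M + 1 by positivity)⟩
  calc (M + 1) * (γ / (2 * ((M + 1) * K)) * (n : ℝ) ^ r)
      ≤ (M + 1) * (γ / (2 * ((M + 1) * K)) * (K * n.choose r)) := by gcongr; exact hpow n hn
    _ = γ / 2 * n.choose r := by field_simp
    _ ≤ M * #T := hT
    _ ≤ (M + 1) * #T := by gcongr; linarith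

end Threshold

section Supersaturation

variable {α : Type} [DecidableEq α] {H : Finset (Finset α)} {S : Finset α} {k : ℕ} {γ : ℝ}

theorem embeddings_mono (H : Finset (Finset α)) {F G : Finset (Finset ℕ)} (h : G ⊆ F) :
    embeddings H G ⊆ embeddings H F := fun φ hφ => by
  rw [mem_embeddings] at hφ ⊢
  exact ⟨hφ.1, fun E hE => h (hφ.2.1 E hE), hφ.2.2⟩

theorem exists_forall_mul_pow_mul_pow_le_card_embeddings (hH : IsKTree k H)
    (h2 : TwoContractible H) (hS : IsCrosscut H S) (hγ : 0 < γ) :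
    ∃ b : ℝ, 0 < b ∧ ∃ n₀ : ℕ, ∀ n ≥ n₀, ∀ (F : Finset (Finset ℕ)) (a : ℝ),
      IsKGraphOn k n F → (#F : ℝ) = a * n.choose (k - 1) → (#S : ℝ) - 1 + γ ≤ a →
      b * a ^ #H * (n : ℝ) ^ (#(vertexSet H) - #H) ≤ #(embeddings H F) := by
  obtain ⟨r, rfl⟩ : ∃ r, k = r + 1 :=
    Nat.exists_eq_add_one.2 (zero_lt_two.trans_le (h2.two_le hH.2 hH.1.nonempty))
  have hσ : 0 < #S := card_pos.2 (hS.nonempty hH.1.nonempty)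
  have hσ' : (1 : ℝ) ≤ #S := mod_cast hσ
  obtain ⟨d, hd, δ, hδ, L, hdich⟩ := exists_forall_hasLargeDegrees_or_many_neighbors r
    (2 * #(vertexSet H) * (r + 1) + 1) hσ hγ
  obtain ⟨c, hc, n₁, hmany⟩ := exists_forall_mul_pow_le_card_embeddings hH h2 hS hδ
  refine ⟨min ((d / 2) ^ #H) (c / max L 1 ^ #H), by positivity, n₁ + 2 * r + 1,
    fun n hn F a hF hFa ha => ?_⟩
  have ha0 : 0 ≤ a := by linarith
  rcases hdich n (by omega) F a hF hFa ha with ⟨G, hGF, hne, hdeg⟩ | ⟨haL, hT⟩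
  · calc min ((d / 2) ^ #H) (c / max L 1 ^ #H) * a ^ #H * (n : ℝ) ^ (#(vertexSet H) - #H)
        ≤ (d / 2) ^ #H * a ^ #H * (n : ℝ) ^ (#(vertexSet H) - #H) := by
          gcongr
          exact min_le_left _ _
      _ = (d * a / 2) ^ #H * (n : ℝ) ^ (#(vertexSet H) - #H) := by
          rw [← mul_pow, div_mul_eq_mul_div]
      _ ≤ #(embeddings H G) := hdeg.pow_mul_pow_le_card_embeddings hH h2 (by omega)
          (fun E hE => (hF E (hGF hE)).2) hne (by positivity)
      _ ≤ #(embeddings H F) := mod_cast card_le_card (embeddings_mono H hGF)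
  · calc min ((d / 2) ^ #H) (c / max L 1 ^ #H) * a ^ #H * (n : ℝ) ^ (#(vertexSet H) - #H)
        ≤ c / max L 1 ^ #H * max L 1 ^ #H * (n : ℝ) ^ (#(vertexSet H) - #H) := by
          gcongr
          · exact min_le_right _ _
          · exact haL.trans (le_max_left _ _)
      _ = c * (n : ℝ) ^ (#(vertexSet H) - #H) := by rw [div_mul_cancel₀ _ (by positivity)]
      _ ≤ #(embeddings H F) := hmany n (by omega) F _ (fun D hD => by
          obtain ⟨hD, hDF⟩ := mem_filter.1 hD
          exact ⟨(mem_powersetCard.1 hD).1, (mem_powersetCard.1 hD).2, hDF⟩) hT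

theorem stmt_12_general (hH : IsKTree k H) (h2 : TwoContractible H) (hS : IsCrosscut H S)
    (hγ : 0 < γ) :
    ∃ β : ℝ, 0 < β ∧ ∃ n₀ : ℕ, ∀ n ≥ n₀, ∀ F : Finset (Finset ℕ), ∀ a : ℝ,
      IsKGraphOn k n F → (#F : ℝ) = a * n.choose (k - 1) → (#S : ℝ) - 1 + γ ≤ a →
      β * a ^ #H * (n : ℝ) ^ (#(vertexSet H) - #H) ≤ #(copies H F) := by
  obtain ⟨b, hb, n₀, hbound⟩ := exists_forall_mul_pow_mul_pow_le_card_embeddings hH h2 hS hγ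
  have hV : 0 < #(vertexSet H) := (card_pos.2 hH.1.nonempty).trans_le h2.card_le_card_vertexSet
  refine ⟨b / (#(vertexSet H) : ℝ) ^ #(vertexSet H), by positivity, n₀,
    fun n hn F a hF hFa ha => ?_⟩
  rw [mul_assoc, div_mul_eq_mul_div, ← mul_assoc, div_le_iff₀' (by positivity)]
  exact (hbound n hn F a hF hFa ha).trans (mod_cast card_embeddings_le H F)

end Supersaturation

/-- optimal supersaturation at the Turán threshold: a `k`-graph with
`a·C(n,k−1)` edges, `a ≥ σ−1+γ`, contains at least `β·a^t·n^{s−t}` copies of a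
2-contractible `k`-tree `H` with `s` vertices, `t` edges and cross-cut number `σ`. -/
theorem stmt_12 {α : Type} [DecidableEq α] (k s t σ : ℕ) (hk : 4 ≤ k)
    (γ : ℝ) (hγ0 : 0 < γ) (hγ1 : γ < 1)
    (H : Finset (Finset α)) (hH : IsKTree k H) (h2 : TwoContractible H)
    (hvs : (vertexSet H).card = s) (hte : H.card = t)
    (hσ : IsCrosscutNumber H σ) :
    ∃ β : ℝ, 0 < β ∧ ∃ n₀ : ℕ, ∀ n ≥ n₀, ∀ F : Finset (Finset ℕ), ∀ a : ℝ,
      IsKGraphOn k n F → (F.card : ℝ) = a * (n.choose (k - 1) : ℝ) →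
      (σ : ℝ) - 1 + γ ≤ a →
      β * a ^ t * (n : ℝ) ^ (s - t) ≤ ((copies H F).card : ℝ) := by
  obtain ⟨⟨S, hS, rfl⟩, -⟩ := hσ
  subst hvs hte
  exact stmt_12_general hH h2 hS hγ0
end

section
/- Let t be a positive integer, d ≥ 2 a real, M > 0 a real, and let K be a d-graded t-uniform hypergraph with |K| < d^{t−1}·M. Then: (1) the number of vertices v ∈ V(K) with d_K(v) = ⌊d^{t−1}⌋ is less than 2tM; and (2) every admissible set S ⊆ V(K) with 1 ≤ |S| ≤ t−1 satisfies |Z_K(S)| ≤ t·2^{t+1}·d. -/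
open Finset Filter

attribute [local instance] Classical.propDecidable

/-!
Count the incidences between a set `A` of vertices `v` for which `T ∪ {v}` has the same degree `m`
and the edges containing `T`: each edge has at most `t` vertices, so `|A| m ≤ t d_K(T)`. For
`m = ⌊x⌋` with `1 ≤ x` the rounding costs a factor of at most two, so `|A| x ≤ 2 t d_K(T)`.
The case `T = ∅`, `x = d^(t-1)` bounds the number of saturated vertices. If `S` is admissible and
`v ∈ Z_K(S)`, then a saturated subset of `S ∪ {v}` consists of `v` and a nonempty `T ⊆ S`. As
`d_K(T) ≤ d^(t-|T|)`, the case `x = d^(t-|T|-1)` shows that each of the at most `2^|S|` choices of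
`T` accounts for at most `2 t d` vertices.
-/

section DegreeCounting

variable {α : Type} [DecidableEq α] {t : ℕ} {d : ℝ} {K : Finset (Finset α)} {S T A : Finset α}

theorem card_mul_le_mul_uDeg {m : ℕ} (hK : ∀ e ∈ K, #e ≤ t)
    (hA : ∀ v ∈ A, m ≤ uDeg K (insert v T)) : #A * m ≤ t * uDeg K T := by
  rw [mul_comm t]
  refine card_mul_le_card_mul (fun v e ↦ v ∈ e) (fun v hv ↦ (hA v hv).trans ?_) fun e he ↦ ?_
  · refine card_le_card fun e he ↦ ?_
    obtain ⟨heK, hve, hTe⟩ : e ∈ K ∧ v ∈ e ∧ T ⊆ e := by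
      simpa only [mem_filter, insert_subset_iff] using he
    exact (mem_bipartiteAbove _).2 ⟨mem_filter.2 ⟨heK, hTe⟩, hve⟩
  · calc #(A.bipartiteBelow (fun v e ↦ v ∈ e) e)
        ≤ #e := card_le_card fun v hv ↦ ((mem_bipartiteBelow _).1 hv).2
      _ ≤ t := hK e (mem_filter.1 he).1

theorem card_mul_le_two_mul_uDeg {x : ℝ} (hx : 1 ≤ x) (hK : ∀ e ∈ K, #e ≤ t)
    (hA : ∀ v ∈ A, uDeg K (insert v T) = ⌊x⌋₊) : #A * x ≤ 2 * t * uDeg K T := by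
  have hcount : (#A * ⌊x⌋₊ : ℝ) ≤ t * uDeg K T := by
    exact_mod_cast card_mul_le_mul_uDeg hK fun v hv ↦ (hA v hv).ge
  calc #A * x ≤ #A * (2 * ⌊x⌋₊) := by
        gcongr
        linarith [Nat.div_two_lt_floor hx]
    _ = 2 * (#A * ⌊x⌋₊) := by ring
    _ ≤ 2 * (t * uDeg K T) := by gcongr
    _ = 2 * t * uDeg K T := by ring

theorem card_filter_uDeg_singleton_mul_le {x : ℝ} (hx : 1 ≤ x) (hK : ∀ e ∈ K, #e ≤ t) :
    #{v ∈ vertexSet K | uDeg K {v} = ⌊x⌋₊} * x ≤ 2 * t * #K := by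
  have huDeg : uDeg K ∅ = #K := by simp [uDeg]
  rw [← huDeg]
  exact card_mul_le_two_mul_uDeg hx hK fun v hv ↦ (mem_filter.1 hv).2

/-- The vertices `v ∉ T` of `K` for which `T ∪ {v}` is saturated. For admissible `S`, these sets
with `∅ ≠ T ⊆ S` cover `Z_K(S)`. -/
noncomputable def saturatedExtensions (t : ℕ) (d : ℝ) (K : Finset (Finset α)) (T : Finset α) :
    Finset α :=
  {v ∈ vertexSet K | v ∉ T ∧ Saturated t d K (insert v T)}

theorem card_saturatedExtensions_le (hd : 1 ≤ d) (hK : ∀ e ∈ K, #e ≤ t) (hT : #T < t)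
    (hdeg : uDeg K T ≤ d ^ (t - #T)) : #(saturatedExtensions t d K T) ≤ 2 * t * d := by
  set k := t - (#T + 1)
  have hcount : #(saturatedExtensions t d K T) * d ^ k ≤ 2 * t * uDeg K T := by
    refine card_mul_le_two_mul_uDeg (one_le_pow₀ hd) hK fun v hv ↦ ?_
    obtain ⟨-, hvT, hsat⟩ := mem_filter.1 hv
    rwa [Saturated, card_insert_of_notMem hvT] at hsat
  refine le_of_mul_le_mul_right (hcount.trans ?_) (by positivity : 0 < d ^ k)
  calc 2 * t * (uDeg K T : ℝ) ≤ 2 * t * d ^ (k + 1) := by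
        gcongr
        rwa [show k + 1 = t - #T by omega]
    _ = 2 * t * d * d ^ k := by ring

theorem Zset_subset_biUnion_saturatedExtensions (hS : Admissible t d K S) :
    Zset t d K S ⊆ (S.powerset.erase ∅).biUnion (saturatedExtensions t d K) := by
  intro v hv
  obtain ⟨hvK, hinadm, hvsat⟩ := mem_filter.1 hv
  obtain ⟨U, hUS, hU, hUsat⟩ : ∃ U ⊆ insert v S, U.Nonempty ∧ Saturated t d K U := by
    simpa [Admissible] using hinadm
  have hvU : v ∈ U := by
    by_contra hvU
    exact hS U ((subset_insert_iff_of_notMem hvU).1 hUS) hU hUsat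
  have hUv : U.erase v ≠ ∅ := by
    intro hempty
    rw [← insert_erase hvU, hempty, insert_empty_eq] at hUsat
    exact hvsat hUsat
  refine mem_biUnion.2 ⟨U.erase v, ?_, mem_filter.2 ⟨hvK, notMem_erase v U, ?_⟩⟩
  · exact mem_erase.2 ⟨hUv, mem_powerset.2 (subset_insert_iff.1 hUS)⟩
  · rwa [insert_erase hvU]

theorem card_Zset_le (hd : 1 ≤ d) (hK : ∀ e ∈ K, #e ≤ t) (hgraded : Graded t d K) (hSt : #S < t)
    (hS : Admissible t d K S) : #(Zset t d K S) ≤ t * 2 ^ (#S + 1) * d := by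
  have hext : ∀ T ∈ S.powerset.erase ∅, (#(saturatedExtensions t d K T) : ℝ) ≤ 2 * t * d := by
    intro T hT
    obtain ⟨hTne, hTS⟩ := mem_erase.1 hT
    have hTt : #T < t := (card_le_card (mem_powerset.1 hTS)).trans_lt hSt
    exact card_saturatedExtensions_le hd hK hTt
      (hgraded T (card_pos.2 (nonempty_iff_ne_empty.2 hTne)) hTt.le)
  calc (#(Zset t d K S) : ℝ)
      ≤ ∑ T ∈ S.powerset.erase ∅, (#(saturatedExtensions t d K T) : ℝ) := by
        exact_mod_cast (card_le_card (Zset_subset_biUnion_saturatedExtensions hS)).trans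
          card_biUnion_le
    _ ≤ #(S.powerset.erase ∅) * (2 * t * d) := by
        simpa only [nsmul_eq_mul] using sum_le_card_nsmul _ _ _ hext
    _ ≤ 2 ^ #S * (2 * t * d) := by
        gcongr
        exact_mod_cast (card_erase_le.trans (card_powerset S).le)
    _ = t * 2 ^ (#S + 1) * d := by ring

end DegreeCounting

theorem stmt_13_general {α : Type} [DecidableEq α] {t : ℕ} (ht : 1 ≤ t) {d M : ℝ} (hd : 1 ≤ d)
    {K : Finset (Finset α)} (hK : ∀ e ∈ K, #e ≤ t) (hgraded : Graded t d K)
    (hsize : #K < d ^ (t - 1) * M) :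
    #{v ∈ vertexSet K | uDeg K {v} = ⌊d ^ (t - 1)⌋₊} < 2 * t * M ∧
      ∀ S, #S < t → Admissible t d K S → #(Zset t d K S) ≤ t * 2 ^ (#S + 1) * d := by
  refine ⟨?_, fun S hSt hS ↦ card_Zset_le hd hK hgraded hSt hS⟩
  refine lt_of_mul_lt_mul_right ?_ (by positivity : 0 ≤ d ^ (t - 1))
  calc #{v ∈ vertexSet K | uDeg K {v} = ⌊d ^ (t - 1)⌋₊} * d ^ (t - 1)
      ≤ 2 * t * (#K : ℝ) := card_filter_uDeg_singleton_mul_le (one_le_pow₀ hd) hK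
    _ < 2 * t * (d ^ (t - 1) * M) := by gcongr
    _ = 2 * t * M * d ^ (t - 1) := by ring

/-- in a `d`-graded `t`-uniform hypergraph `K` with `|K| < d^{t−1}·M`, fewer
than `2tM` vertices have degree `⌊d^{t−1}⌋`, and every admissible set `S` with
`1 ≤ |S| ≤ t−1` satisfies `|Z_K(S)| ≤ t·2^{t+1}·d`. -/
theorem stmt_13 {α : Type} [DecidableEq α] (t : ℕ) (ht : 1 ≤ t) (d M : ℝ)
    (hd : 2 ≤ d) (hM : 0 < M)
    (K : Finset (Finset α)) (hunif : ∀ e ∈ K, e.card = t)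
    (hgraded : Graded t d K) (hsize : (K.card : ℝ) < d ^ (t - 1) * M) :
    ((((vertexSet K).filter fun v => uDeg K {v} = ⌊d ^ (t - 1)⌋₊).card : ℝ) < 2 * t * M) ∧
    (∀ S ⊆ vertexSet K, 1 ≤ S.card → S.card ≤ t - 1 → Admissible t d K S →
      ((Zset t d K S).card : ℝ) ≤ (t : ℝ) * 2 ^ (t + 1) * d) := by
  obtain ⟨hsat, hZ⟩ :=
    stmt_13_general ht (one_le_two.trans hd) (fun e he ↦ (hunif e he).le) hgraded hsize
  refine ⟨hsat, fun S _ _ hSt hS ↦ (hZ S (by omega) hS).trans ?_⟩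
  have hSt' : #S ≤ t := by omega
  gcongr
  exact one_le_two
end
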